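/- arXiv:2510.07605 — 11 statements merged into one kernel-verified Lean document; each statement's English description precedes it below -/
import Mathlib

section
/- Let h ∈ M_n(ℂ) be positive semidefinite and let f : [0,∞) → ℝ be a continuous convex function. Then tr(f(h)) equals the maximum, over all finite resolutions of identity (p_1,…,p_k) in M_n(ℂ), of Σ_{i=1}^k f(α_i) · tr(p_i), where α_i = tr(p_i h)/tr(p_i). -/
open scoped Matrix ComplexOrder

/-- Variational formula for `tr(f(h))`, `h ≥ 0` in `M_n(ℂ)`, `f` continuous convex on `[0,∞)`:
`tr(f(h))` is the maximum over all finite resolutions of identity `(p_1, …, p_k)` of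
`Σ_i f(α_i) tr(p_i)` with `α_i = tr(p_i h)/tr(p_i)`.  Here `tr(f(h))` is expressed via the
spectral functional calculus as the sum of `f` over the eigenvalues of `h`. -/
theorem trace_convex_sup_resolutions {n : ℕ}
    (h : Matrix (Fin n) (Fin n) ℂ) (hh : h.PosSemidef)
    (f : ℝ → ℝ) (hf_cont : ContinuousOn f (Set.Ici 0)) (hf_conv : ConvexOn ℝ (Set.Ici 0) f) :
    IsGreatest
      {r : ℝ | ∃ (k : ℕ) (p : Fin k → Matrix (Fin n) (Fin n) ℂ),
        (∀ i, (p i).IsHermitian) ∧ (∀ i, p i * p i = p i) ∧ (∀ i, p i ≠ 0) ∧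
        (∀ i j, i ≠ j → p i * p j = 0) ∧ (∑ i, p i = 1) ∧
        r = ∑ i, f ((Matrix.trace (p i * h)).re / (Matrix.trace (p i)).re) *
              (Matrix.trace (p i)).re}
      (∑ i, f (hh.1.eigenvalues i)) := by
  obtain ⟨U, hU1, hU2, hD⟩ : ∃ U : Matrix (Fin n) (Fin n) ℂ, Uᴴ * U = 1 ∧ U * Uᴴ = 1 ∧
      h = U * Matrix.diagonal (fun i => (hh.1.eigenvalues i : ℂ)) * Uᴴ := by
    refine ⟨hh.1.eigenvectorUnitary, ?_, ?_, ?_⟩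
    · exact Unitary.coe_star_mul_self hh.1.eigenvectorUnitary
    · exact Unitary.coe_mul_star_self hh.1.eigenvectorUnitary
    · have := hh.1.spectral_theorem
      rw [Unitary.conjStarAlgAut_apply] at this
      exact this
  have hnn : ∀ i, 0 ≤ hh.1.eigenvalues i := hh.eigenvalues_nonneg
  generalize hh.1.eigenvalues = l at hD hnn
  -- traces in the eigenbasis
  have htr : ∀ p : Matrix (Fin n) (Fin n) ℂ,
      (Matrix.trace p).re = ∑ j, ((Uᴴ * p * U) j j).re := by
    intro p
    have : Matrix.trace p = Matrix.trace (Uᴴ * p * U) := by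
      rw [Matrix.trace_mul_comm, ← Matrix.mul_assoc, hU2, Matrix.one_mul]
    rw [this, Matrix.trace, Complex.re_sum]
    rfl
  have htrh : ∀ p : Matrix (Fin n) (Fin n) ℂ,
      (Matrix.trace (p * h)).re = ∑ j, ((Uᴴ * p * U) j j).re * l j := by
    intro p
    have : Matrix.trace (p * h)
        = Matrix.trace ((Uᴴ * p * U) * Matrix.diagonal (fun i => (l i : ℂ))) := by
      rw [hD, ← Matrix.mul_assoc, Matrix.trace_mul_comm]
      simp only [Matrix.mul_assoc]
    rw [this, Matrix.trace, Complex.re_sum]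
    refine Finset.sum_congr rfl fun j _ => ?_
    simp [Matrix.mul_diagonal]
  constructor
  · have key : ∀ A : Matrix (Fin n) (Fin n) ℂ, Uᴴ * (U * A * Uᴴ) * U = A := by
      intro A
      calc Uᴴ * (U * A * Uᴴ) * U = (Uᴴ * U) * A * (Uᴴ * U) := by
            simp only [Matrix.mul_assoc]
        _ = A := by rw [hU1]; simp
    have key2 : ∀ A B : Matrix (Fin n) (Fin n) ℂ,
        (U * A * Uᴴ) * (U * B * Uᴴ) = U * (A * B) * Uᴴ := by
      intro A B
      calc (U * A * Uᴴ) * (U * B * Uᴴ) = U * A * (Uᴴ * U) * B * Uᴴ := by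
            simp only [Matrix.mul_assoc]
        _ = _ := by rw [hU1]; simp [Matrix.mul_assoc]
    refine ⟨n, fun i => U * Matrix.single i i 1 * Uᴴ, ?_, ?_, ?_, ?_, ?_, ?_⟩
    · intro i
      simp [Matrix.IsHermitian, Matrix.conjTranspose_mul, Matrix.mul_assoc]
    · intro i
      simp only [key2]
      simp
    · intro i h0
      have := key (Matrix.single i i 1)
      simp only at h0
      rw [h0] at this
      have := congrFun (congrFun this i) i
      simp at this
    · intro i j hij
      simp only [key2]
      simp [hij]
    · rw [← Finset.sum_mul, ← Finset.mul_sum]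
      have : ∑ i : Fin n, Matrix.single i i (1 : ℂ) = 1 := by
        ext a b
        simp [Matrix.sum_apply, Matrix.single_apply, Matrix.one_apply, ite_and]
      rw [this, Matrix.mul_one, hU2]
    · refine Finset.sum_congr rfl fun i _ => ?_
      beta_reduce
      rw [htrh, htr, key]
      have e : ∀ j, ((Matrix.single i i (1 : ℂ)) j j).re = if i = j then 1 else 0 := by
        intro j
        by_cases hij : i = j <;> simp [Matrix.single_apply, hij]
      simp [e]
  · rintro r ⟨k, p, hH, hI, h0, -, hS, rfl⟩
    have hpsd : ∀ i, (p i).PosSemidef := by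
      intro i
      have := Matrix.posSemidef_conjTranspose_mul_self (p i)
      rwa [(hH i).eq, hI i] at this
    have hw : ∀ i j, 0 ≤ ((Uᴴ * p i * U) j j).re := fun i j =>
      (Complex.le_def.1 ((hpsd i).conjTranspose_mul_mul_same U).diag_nonneg).1
    have hpos : ∀ i, 0 < (Matrix.trace (p i)).re := by
      intro i
      have h1 := Complex.le_def.1 (hpsd i).trace_nonneg
      refine lt_of_le_of_ne h1.1 fun h2 => h0 i ?_
      rw [← (hpsd i).trace_eq_zero_iff]
      exact Complex.ext h2.symm h1.2.symm
    have hsum : ∀ j, ∑ i, ((Uᴴ * p i * U) j j).re = 1 := by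
      intro j
      rw [← Complex.re_sum, ← Matrix.sum_apply, ← Finset.sum_mul, ← Finset.mul_sum, hS,
        Matrix.mul_one, hU1]
      simp
    calc _ ≤ ∑ i, ∑ j, ((Uᴴ * p i * U) j j).re * f (l j) := by
          refine Finset.sum_le_sum fun i _ => ?_
          have hp := hpos i
          rw [htr] at hp
          have := hf_conv.map_centerMass_le (t := Finset.univ) (p := l) (fun j _ => hw i j) hp
            (fun j _ => hnn j)
          rw [htrh, htr, ← le_div_iff₀ hp]
          simpa only [Finset.centerMass, smul_eq_mul, Function.comp, inv_mul_eq_div] using this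
      _ = _ := by
          rw [Finset.sum_comm]
          refine Finset.sum_congr rfl fun j _ => ?_
          rw [← Finset.sum_mul, hsum, one_mul]
end

section
/- Let h ∈ M_n(ℂ) be positive semidefinite and let f : [0,∞) → ℝ be a continuous concave function. Then tr(f(h)) equals the minimum, over all finite resolutions of identity (p_1,…,p_k) in M_n(ℂ), of Σ_{i=1}^k f(α_i) · tr(p_i), where α_i = tr(p_i h)/tr(p_i). -/
open scoped Matrix ComplexOrder

/-- Variational formula for `tr(f(h))`, `h ≥ 0` in `M_n(ℂ)`, `f` continuous concave on `[0,∞)`: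
`tr(f(h))` is the minimum over all finite resolutions of identity `(p_1, …, p_k)` of
`Σ_i f(α_i) tr(p_i)` with `α_i = tr(p_i h)/tr(p_i)`.  Here `tr(f(h))` is expressed via the
spectral functional calculus as the sum of `f` over the eigenvalues of `h`. -/
theorem trace_concave_inf_resolutions {n : ℕ}
    (h : Matrix (Fin n) (Fin n) ℂ) (hh : h.PosSemidef)
    (f : ℝ → ℝ) (hf_cont : ContinuousOn f (Set.Ici 0)) (hf_conc : ConcaveOn ℝ (Set.Ici 0) f) :
    IsLeast
      {r : ℝ | ∃ (k : ℕ) (p : Fin k → Matrix (Fin n) (Fin n) ℂ),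
        (∀ i, (p i).IsHermitian) ∧ (∀ i, p i * p i = p i) ∧ (∀ i, p i ≠ 0) ∧
        (∀ i j, i ≠ j → p i * p j = 0) ∧ (∑ i, p i = 1) ∧
        r = ∑ i, f ((Matrix.trace (p i * h)).re / (Matrix.trace (p i)).re) *
              (Matrix.trace (p i)).re}
      (∑ i, f (hh.1.eigenvalues i)) := by
  have hlam : ∀ j, 0 ≤ hh.1.eigenvalues j := hh.eigenvalues_nonneg
  obtain ⟨U, D, hUU, hUU', hD, hspec⟩ : ∃ U D : Matrix (Fin n) (Fin n) ℂ,
      Uᴴ * U = 1 ∧ U * Uᴴ = 1 ∧ D = Matrix.diagonal (fun j => (hh.1.eigenvalues j : ℂ)) ∧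
      h = U * D * Uᴴ := by
    refine ⟨hh.1.eigenvectorUnitary, _, ?_, ?_, rfl, ?_⟩
    · exact Unitary.coe_star_mul_self _
    · exact Unitary.coe_mul_star_self _
    · have := hh.1.spectral_theorem
      rw [Unitary.conjStarAlgAut_apply] at this
      exact this
  generalize hh.1.eigenvalues = lam at *
  have htr : ∀ p : Matrix (Fin n) (Fin n) ℂ, p.trace = (Uᴴ * p * U).trace := by
    intro p
    rw [Matrix.trace_mul_comm, ← Matrix.mul_assoc, hUU', Matrix.one_mul]
  have htrh : ∀ p : Matrix (Fin n) (Fin n) ℂ,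
      ((p * h).trace).re = ∑ j, ((Uᴴ * p * U) j j).re * lam j := by
    intro p
    have : (p * h).trace = ((Uᴴ * p * U) * D).trace := by
      rw [hspec, ← Matrix.mul_assoc, Matrix.trace_mul_comm]
      simp only [Matrix.mul_assoc]
    rw [this, hD]
    simp [Matrix.trace, Matrix.mul_diagonal]
  constructor
  · have hc : ∀ i, Uᴴ * (U * Matrix.single i i (1 : ℂ) * Uᴴ) * U = Matrix.single i i (1 : ℂ) := by
      intro i
      calc _ = (Uᴴ * U) * Matrix.single i i (1 : ℂ) * (Uᴴ * U) := by
            simp only [Matrix.mul_assoc]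
        _ = _ := by rw [hUU]; simp
    have hm : ∀ i j, (U * Matrix.single i i (1 : ℂ) * Uᴴ) * (U * Matrix.single j j (1 : ℂ) * Uᴴ)
        = U * (Matrix.single i i (1 : ℂ) * Matrix.single j j (1 : ℂ)) * Uᴴ := by
      intro i j
      calc _ = U * Matrix.single i i (1 : ℂ) * (Uᴴ * U) * Matrix.single j j (1 : ℂ) * Uᴴ := by
            simp only [Matrix.mul_assoc]
        _ = _ := by rw [hUU]; simp only [Matrix.mul_assoc, Matrix.mul_one, Matrix.one_mul]
    refine ⟨n, fun i => U * Matrix.single i i (1 : ℂ) * Uᴴ, ?_, ?_, ?_, ?_, ?_, ?_⟩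
    · intro i
      simp [Matrix.IsHermitian, Matrix.conjTranspose_mul, Matrix.mul_assoc]
    · intro i
      simp [hm]
    · intro i h0
      have := hc i
      beta_reduce at h0
      rw [h0] at this
      have := congrFun (congrFun this i) i
      simp at this
    · intro i j hij
      simp only [hm]
      rw [Matrix.single_mul_single_of_ne (h := hij)]
      simp
    · rw [← Finset.sum_mul, ← Finset.mul_sum]
      have : ∑ i, Matrix.single i i (1 : ℂ) = (1 : Matrix (Fin n) (Fin n) ℂ) := by
        rw [Matrix.sum_single_eq_diagonal]; simp
      rw [this, Matrix.mul_one, hUU']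
    · refine Finset.sum_congr rfl fun i _ => ?_
      have h1 : (Matrix.trace (U * Matrix.single i i (1 : ℂ) * Uᴴ)) = 1 := by
        rw [htr, hc]; simp
      have h2 : (Matrix.trace (U * Matrix.single i i (1 : ℂ) * Uᴴ * h)).re = lam i := by
        rw [htrh, hc, Finset.sum_eq_single i]
        · simp
        · intro j _ hj
          simp [Matrix.single_apply, hj.symm]
        · simp
      simp only [h1, h2]
      simp
  · rintro r ⟨k, p, hH, hP, hne, -, hsum, rfl⟩
    have hps : ∀ i, (p i).PosSemidef := by
      intro i
      have := Matrix.posSemidef_conjTranspose_mul_self (p i)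
      rwa [(hH i).eq, hP i] at this
    have hw : ∀ i j, 0 ≤ ((Uᴴ * p i * U) j j).re := by
      intro i j
      exact (Complex.le_def.1 (((hps i).conjTranspose_mul_mul_same U).diag_nonneg (i := j))).1
    have hws : ∀ j, ∑ i, ((Uᴴ * p i * U) j j).re = 1 := by
      intro j
      have : ∑ i, Uᴴ * p i * U = 1 := by
        rw [← Finset.sum_mul, ← Finset.mul_sum, hsum, Matrix.mul_one, hUU]
      have := congrFun (congrFun this j) j
      rw [Matrix.sum_apply] at this
      rw [← Complex.re_sum, this]; simp
    have ht : ∀ i, (p i).trace.re = ∑ j, ((Uᴴ * p i * U) j j).re := by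
      intro i
      rw [htr]; simp [Matrix.trace]
    have htpos : ∀ i, 0 < (p i).trace.re := by
      intro i
      have h0 := Complex.le_def.1 (hps i).trace_nonneg
      refine lt_of_le_of_ne h0.1 fun h1 => hne i ?_
      exact (hps i).trace_eq_zero_iff.1 (Complex.ext h1.symm h0.2.symm)
    calc ∑ j, f (lam j) = ∑ i, ∑ j, ((Uᴴ * p i * U) j j).re * f (lam j) := by
          rw [Finset.sum_comm]
          refine Finset.sum_congr rfl fun j _ => ?_
          rw [← Finset.sum_mul, hws, one_mul]
      _ ≤ _ := by
          refine Finset.sum_le_sum fun i _ => ?_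
          have hJ := hf_conc.le_map_centerMass (t := Finset.univ)
            (w := fun j => ((Uᴴ * p i * U) j j).re) (p := lam) (fun j _ => hw i j)
            (by rw [← ht]; exact htpos i) (fun j _ => hlam j)
          simp only [Finset.centerMass, smul_eq_mul, ← ht, ← htrh, Function.comp] at hJ
          rw [inv_mul_eq_div, inv_mul_eq_div, div_le_iff₀ (htpos i)] at hJ
          exact hJ
end

section
/- Let D ∈ M_n(ℂ) be positive semidefinite with tr D = 1, and let φ(t) = t log t for t > 0, φ(0) = 0. Then tr(φ(D)) equals the maximum, over all finite resolutions of identity (p_1,…,p_k) in M_n(ℂ), of Σ_{i=1}^k tr(p_i D) · (log tr(p_i D) − log tr(p_i)), where a summand with tr(p_i D) = 0 is taken to be 0. (Variational formula for the Segal entropy of the state ω(x) = tr(xD) in terms of projective resolutions of identity.) -/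
open scoped Matrix ComplexOrder

theorem segal_aux_jensen {n : ℕ} (a l : Fin n → ℝ) (ha : ∀ j, 0 ≤ a j) (hl : ∀ j, 0 ≤ l j)
    (t : ℝ) (ht : 0 < t) (hat : ∑ j, a j = t) :
    (∑ j, a j * l j) * (Real.log (∑ j, a j * l j) - Real.log t)
      ≤ ∑ j, a j * (l j * Real.log (l j)) := by
  have h := Real.convexOn_mul_log.map_sum_le (t := Finset.univ) (w := fun j => a j / t) (p := l)
    (fun j _ => div_nonneg (ha j) ht.le)
    (by rw [← Finset.sum_div, hat, div_self ht.ne']) (fun j _ => hl j)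
  simp only [smul_eq_mul, div_mul_eq_mul_div] at h
  rw [← Finset.sum_div, ← Finset.sum_div] at h
  have hS : 0 ≤ ∑ j, a j * l j := Finset.sum_nonneg fun j _ => mul_nonneg (ha j) (hl j)
  rcases hS.eq_or_lt with h0 | h0
  · rw [← h0] at h ⊢
    simp only [zero_div, zero_mul] at h ⊢
    exact (div_nonneg_iff.mp h).elim (fun h => h.1) (fun h => absurd h.2 (not_le.mpr ht))
  · rw [Real.log_div h0.ne' ht.ne', div_mul_eq_mul_div] at h
    exact (div_le_div_iff_of_pos_right ht).mp h

theorem segal_aux_trace {n : ℕ} (q U D : Matrix (Fin n) (Fin n) ℂ) (l : Fin n → ℝ)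
    (hD : D = U * Matrix.diagonal (fun j => (l j : ℂ)) * Uᴴ) :
    (Matrix.trace (q * D)).re = ∑ j, ((Uᴴ * q * U) j j).re * l j := by
  have : Matrix.trace (q * D)
      = Matrix.trace ((Uᴴ * q * U) * Matrix.diagonal (fun j => (l j : ℂ))) := by
    rw [hD, ← mul_assoc, Matrix.trace_mul_comm]
    simp only [mul_assoc]
  rw [this, Matrix.trace, Complex.re_sum]
  refine Finset.sum_congr rfl fun j _ => ?_
  rw [Matrix.diag_apply, Matrix.mul_diagonal, Complex.re_mul_ofReal]

theorem segal_entropy_resolution_variational {n : ℕ}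
    (D : Matrix (Fin n) (Fin n) ℂ) (hD : D.PosSemidef) (htr : D.trace = 1) :
    IsGreatest
      {r : ℝ | ∃ (k : ℕ) (p : Fin k → Matrix (Fin n) (Fin n) ℂ),
        (∀ i, (p i).IsHermitian) ∧ (∀ i, p i * p i = p i) ∧ (∀ i, p i ≠ 0) ∧
        (∀ i j, i ≠ j → p i * p j = 0) ∧ (∑ i, p i = 1) ∧
        r = ∑ i, (Matrix.trace (p i * D)).re *
              (Real.log ((Matrix.trace (p i * D)).re) - Real.log ((Matrix.trace (p i)).re))}
      (∑ i, hD.1.eigenvalues i * Real.log (hD.1.eigenvalues i)) := by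
  obtain ⟨U, hU1, hU2, hDU⟩ : ∃ U : Matrix (Fin n) (Fin n) ℂ, Uᴴ * U = 1 ∧ U * Uᴴ = 1 ∧
      D = U * Matrix.diagonal (fun j => (hD.1.eigenvalues j : ℂ)) * Uᴴ := by
    refine ⟨hD.1.eigenvectorUnitary, Unitary.coe_star_mul_self _, Unitary.coe_mul_star_self _, ?_⟩
    have := hD.1.spectral_theorem
    rw [Unitary.conjStarAlgAut_apply] at this
    exact this
  have hl : ∀ j, 0 ≤ hD.1.eigenvalues j := hD.eigenvalues_nonneg
  generalize hD.1.eigenvalues = l at *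
  have hc : ∀ X Y : Matrix (Fin n) (Fin n) ℂ, (U * X * Uᴴ) * (U * Y * Uᴴ) = U * (X * Y) * Uᴴ := by
    intro X Y
    calc _ = U * X * (Uᴴ * U) * Y * Uᴴ := by simp only [mul_assoc]
      _ = _ := by rw [hU1]; simp only [mul_assoc, one_mul]
  have hd : ∀ X : Matrix (Fin n) (Fin n) ℂ, Uᴴ * (U * X * Uᴴ) * U = X := by
    intro X
    calc _ = (Uᴴ * U) * X * (Uᴴ * U) := by simp only [mul_assoc]
      _ = _ := by rw [hU1]; simp only [mul_one, one_mul]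
  have htrU : ∀ X : Matrix (Fin n) (Fin n) ℂ, Matrix.trace (Uᴴ * X * U) = Matrix.trace X := by
    intro X
    rw [Matrix.trace_mul_comm, ← mul_assoc, hU2, one_mul]
  constructor
  · refine ⟨n, fun i => U * Matrix.single i i 1 * Uᴴ, ?_, ?_, ?_, ?_, ?_, ?_⟩
    · intro i
      simp [Matrix.IsHermitian, Matrix.conjTranspose_mul, mul_assoc]
    · intro i
      simp [hc]
    · intro i h
      have h2 := hd (Matrix.single i i 1)
      beta_reduce at h
      rw [h] at h2
      have := congrFun (congrFun h2 i) i
      simp at this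
    · intro i j hij
      simp [hc, hij]
    · rw [← Finset.sum_mul, ← Finset.mul_sum]
      have : ∑ i : Fin n, Matrix.single i i (1 : ℂ) = 1 := by
        ext a b
        simp only [Matrix.sum_apply, Matrix.single_apply, Matrix.one_apply, ite_and]
        simp
      rw [this, mul_one, hU2]
    · refine Finset.sum_congr rfl fun i _ => ?_
      rw [segal_aux_trace _ U D l hDU, ← htrU (U * Matrix.single i i 1 * Uᴴ), hd]
      have : ∑ j, ((Matrix.single i i (1:ℂ) : Matrix (Fin n) (Fin n) ℂ) j j).re * l j = l i := by
        rw [Finset.sum_eq_single i]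
        · simp
        · intro b _ hb
          simp [Matrix.single_apply, hb.symm]
        · simp
      rw [this]
      simp
  · rintro r ⟨k, p, hh, hi, hne, -, hsum, rfl⟩
    have hps : ∀ i, (p i).PosSemidef := by
      intro i
      have := Matrix.posSemidef_conjTranspose_mul_self (p i)
      rwa [(hh i).eq, hi i] at this
    have key : ∀ i, (Matrix.trace (p i * D)).re *
              (Real.log ((Matrix.trace (p i * D)).re) - Real.log ((Matrix.trace (p i)).re))
        ≤ ∑ j, ((Uᴴ * p i * U) j j).re * (l j * Real.log (l j)) := by
      intro i
      rw [segal_aux_trace _ U D l hDU]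
      refine segal_aux_jensen _ l ?_ hl _ ?_ ?_
      · intro j
        have := ((hps i).conjTranspose_mul_mul_same U).diag_nonneg (i := j)
        exact (Complex.le_def.mp this).1
      · have h0 := (hps i).trace_nonneg
        have h1 : (p i).trace ≠ 0 := fun h => hne i ((hps i).trace_eq_zero_iff.mp h)
        exact (Complex.lt_def.mp (lt_of_le_of_ne h0 h1.symm)).1
      · rw [← htrU (p i), Matrix.trace, Complex.re_sum]
        rfl
    refine (Finset.sum_le_sum fun i _ => key i).trans ?_
    rw [Finset.sum_comm]
    refine le_of_eq (Finset.sum_congr rfl fun j _ => ?_)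
    rw [← Finset.sum_mul, ← Complex.re_sum, ← Matrix.sum_apply, ← Finset.sum_mul,
      ← Finset.mul_sum, hsum, mul_one, hU1]
    simp
end

section
/- Let α ∈ (0,1) and let D ∈ M_n(ℂ) be positive semidefinite with tr D = 1. Then tr(D^α) equals the minimum, over all finite resolutions of identity (p_1,…,p_k) in M_n(ℂ), of Σ_{i=1}^k (tr(p_i D))^α · (tr(p_i))^{1−α}. Consequently, the Rényi entropy R_α := (1/(α−1)) log tr(D^α) satisfies R_α = (1/(α−1)) · min over such resolutions of log Σ_{i=1}^k (tr(p_i D))^α (tr(p_i))^{1−α}. -/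
open scoped Matrix ComplexOrder


lemma renyi_aux {n : ℕ} (D : Matrix (Fin n) (Fin n) ℂ) (hD : D.IsHermitian) :
    ∃ U V : Matrix (Fin n) (Fin n) ℂ, V = Uᴴ ∧ V * U = 1 ∧ U * V = 1 ∧
      D = U * Matrix.diagonal (fun i => (hD.eigenvalues i : ℂ)) * V := by
  refine ⟨hD.eigenvectorUnitary, star (hD.eigenvectorUnitary : Matrix (Fin n) (Fin n) ℂ), rfl,
    Unitary.coe_star_mul_self _, Unitary.coe_mul_star_self _, ?_⟩
  exact hD.spectral_theorem

lemma renyi_least {n : ℕ} {α : ℝ}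
    (hα : α ∈ Set.Ioo (0 : ℝ) 1)
    (D : Matrix (Fin n) (Fin n) ℂ) (hD : D.PosSemidef) :
    IsLeast
      {r : ℝ | ∃ (k : ℕ) (p : Fin k → Matrix (Fin n) (Fin n) ℂ),
        (∀ i, (p i).IsHermitian) ∧ (∀ i, p i * p i = p i) ∧ (∀ i, p i ≠ 0) ∧
        (∀ i j, i ≠ j → p i * p j = 0) ∧ (∑ i, p i = 1) ∧
        r = ∑ i, (Matrix.trace (p i * D)).re ^ α * (Matrix.trace (p i)).re ^ (1 - α)}
      (∑ i, hD.1.eigenvalues i ^ α) := by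
  obtain ⟨h0, h1⟩ := hα
  have hnn : ∀ i, 0 ≤ hD.1.eigenvalues i := hD.eigenvalues_nonneg
  obtain ⟨U, V, hV, hVU, hUV, hDe⟩ := renyi_aux D hD.1
  set l := hD.1.eigenvalues with hl
  clear_value l
  -- traces in the eigenbasis
  have htp : ∀ p : Matrix (Fin n) (Fin n) ℂ, p.trace = (V * p * U).trace := by
    intro p
    rw [Matrix.trace_mul_comm, ← Matrix.mul_assoc, hUV, Matrix.one_mul]
  have htD : ∀ p : Matrix (Fin n) (Fin n) ℂ, (p * D).trace = ∑ j, (V * p * U) j j * (l j : ℂ) := by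
    intro p
    have : (p * D).trace = ((V * p * U) * Matrix.diagonal (fun i => (l i : ℂ))).trace := by
      rw [hDe, ← Matrix.mul_assoc, Matrix.trace_mul_comm]
      simp only [Matrix.mul_assoc]
    rw [this]
    simp [Matrix.trace, Matrix.mul_diagonal]
  constructor
  · have hne : ∀ i : Fin n, V * (U * Matrix.single i i (1 : ℂ) * V) * U = Matrix.single i i 1 := by
      intro i
      calc _ = (V * U) * Matrix.single i i (1 : ℂ) * (V * U) := by simp only [Matrix.mul_assoc]
        _ = _ := by rw [hVU, Matrix.one_mul, Matrix.mul_one]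
    have hmul : ∀ i j : Fin n, (U * Matrix.single i i (1 : ℂ) * V) * (U * Matrix.single j j 1 * V)
        = U * (Matrix.single i i (1 : ℂ) * Matrix.single j j 1) * V := by
      intro i j
      calc _ = U * Matrix.single i i (1 : ℂ) * (V * U) * Matrix.single j j 1 * V := by
            simp only [Matrix.mul_assoc]
        _ = _ := by rw [hVU, Matrix.mul_one]; simp only [Matrix.mul_assoc]
    refine ⟨n, fun i => U * Matrix.single i i 1 * V, ?_, ?_, ?_, ?_, ?_, ?_⟩
    · intro i
      simp [Matrix.IsHermitian, Matrix.conjTranspose_mul, hV, Matrix.mul_assoc]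
    · intro i
      simp only [hmul]
      simp
    · intro i h
      have h2 := hne i
      simp only at h
      rw [h] at h2
      have h3 := congrFun (congrFun h2 i) i
      simp at h3
    · intro i j hij
      simp only [hmul]
      simp [hij]
    · rw [← Finset.sum_mul, ← Finset.mul_sum]
      have : ∑ i : Fin n, Matrix.single i i (1 : ℂ) = 1 := by
        ext a b
        rw [Matrix.sum_apply, Matrix.one_apply]
        simp only [Matrix.single_apply]
        by_cases hab : a = b
        · subst hab
          simp
        · rw [if_neg hab]
          refine Finset.sum_eq_zero fun c _ => if_neg ?_
          rintro ⟨rfl, h⟩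
          exact hab h
      rw [this, Matrix.mul_one, hUV]
    · refine Finset.sum_congr rfl fun i _ => ?_
      rw [htD, htp, hne]
      simp [Matrix.single_apply, Matrix.trace_single_eq_same]
  · rintro r ⟨k, p, hH, hI, -, -, hS, rfl⟩
    set w : Fin k → Fin n → ℝ := fun i j => ((V * p i * U) j j).re with hw
    have hw0 : ∀ i j, 0 ≤ w i j := by
      intro i j
      have h : V * p i * U = (p i * U)ᴴ * (p i * U) := by
        rw [Matrix.conjTranspose_mul, hH i, ← hV]
        calc _ = V * (p i * p i) * U := by rw [hI]
          _ = _ := by simp only [Matrix.mul_assoc]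
      have := (Matrix.posSemidef_conjTranspose_mul_self (p i * U)).diag_nonneg (i := j)
      rw [← h] at this
      exact (Complex.le_def.1 this).1
    have hw1 : ∀ j, ∑ i, w i j = 1 := by
      intro j
      have : ∑ i, V * p i * U = 1 := by
        rw [← Finset.sum_mul, ← Finset.mul_sum, hS, Matrix.mul_one, hVU]
      have h := congrArg Complex.re (congrFun (congrFun this j) j)
      simpa [Matrix.sum_apply] using h
    have key : ∀ i, ∑ j, w i j * l j ^ α ≤
        (Matrix.trace (p i * D)).re ^ α * (Matrix.trace (p i)).re ^ (1 - α) := by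
      intro i
      have e1 : (Matrix.trace (p i * D)).re = ∑ j, w i j * l j := by
        rw [htD]; simp [hw]
      have e2 : (Matrix.trace (p i)).re = ∑ j, w i j := by
        rw [htp]; simp [hw, Matrix.trace]
      rw [e1, e2]
      have := Real.inner_le_weight_mul_Lp_of_nonneg Finset.univ (p := α⁻¹)
        ((one_le_inv₀ h0).2 h1.le) (w i) (fun j => l j ^ α) (hw0 i)
        (fun j => Real.rpow_nonneg (hnn j) _)
      simp only [inv_inv] at this
      rw [mul_comm]
      convert this using 4 with j
      rw [Real.rpow_rpow_inv (hnn _) h0.ne']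
    calc ∑ j, l j ^ α = ∑ j, (∑ i, w i j) * l j ^ α := by simp [hw1]
      _ = ∑ i, ∑ j, w i j * l j ^ α := by
        simp only [Finset.sum_mul]; exact Finset.sum_comm
      _ ≤ _ := Finset.sum_le_sum fun i _ => key i

/-- Variational formula for `tr(D^α)`, `α ∈ (0,1)`, for a density matrix `D` (`D ≥ 0`,
`tr D = 1`): `tr(D^α)` is the minimum over finite resolutions of identity `(p_1,…,p_k)` of
`Σ_i tr(p_i D)^α tr(p_i)^{1−α}`; consequently, the Rényi entropy
`R_α = (1/(α−1)) log tr(D^α)` equals `(1/(α−1))` times the minimum of the logs of these sums.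
Here `tr(D^α)` is expressed spectrally as `Σ_i λ_i^α` over the eigenvalues `λ_i` of `D`. -/
theorem renyi_entropy_lt_one_resolution_variational {n : ℕ} {α : ℝ}
    (hα : α ∈ Set.Ioo (0 : ℝ) 1)
    (D : Matrix (Fin n) (Fin n) ℂ) (hD : D.PosSemidef) (htr : D.trace = 1) :
    IsLeast
      {r : ℝ | ∃ (k : ℕ) (p : Fin k → Matrix (Fin n) (Fin n) ℂ),
        (∀ i, (p i).IsHermitian) ∧ (∀ i, p i * p i = p i) ∧ (∀ i, p i ≠ 0) ∧
        (∀ i j, i ≠ j → p i * p j = 0) ∧ (∑ i, p i = 1) ∧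
        r = ∑ i, (Matrix.trace (p i * D)).re ^ α * (Matrix.trace (p i)).re ^ (1 - α)}
      (∑ i, hD.1.eigenvalues i ^ α) ∧
    (1 / (α - 1)) * Real.log (∑ i, hD.1.eigenvalues i ^ α) =
      (1 / (α - 1)) * sInf (Real.log ''
        {r : ℝ | ∃ (k : ℕ) (p : Fin k → Matrix (Fin n) (Fin n) ℂ),
          (∀ i, (p i).IsHermitian) ∧ (∀ i, p i * p i = p i) ∧ (∀ i, p i ≠ 0) ∧
          (∀ i j, i ≠ j → p i * p j = 0) ∧ (∑ i, p i = 1) ∧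
          r = ∑ i, (Matrix.trace (p i * D)).re ^ α * (Matrix.trace (p i)).re ^ (1 - α)}) := by
  have hL := renyi_least hα D hD
  refine ⟨hL, ?_⟩
  have hpos : 0 < ∑ i, hD.1.eigenvalues i ^ α := by
    have hnn : ∀ i, 0 ≤ hD.1.eigenvalues i := hD.eigenvalues_nonneg
    have hsum := hD.1.trace_eq_sum_eigenvalues
    rw [htr] at hsum
    have h1 : ∃ i, hD.1.eigenvalues i ≠ 0 := by
      by_contra! h
      simp [h] at hsum
    obtain ⟨i, hi⟩ := h1
    exact Finset.sum_pos' (fun j _ => Real.rpow_nonneg (hnn j) _)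
      ⟨i, Finset.mem_univ _, Real.rpow_pos_of_pos (lt_of_le_of_ne (hnn i) hi.symm) _⟩
  congr 1
  symm
  apply IsLeast.csInf_eq
  refine ⟨⟨_, hL.1, rfl⟩, ?_⟩
  rintro _ ⟨r, hr, rfl⟩
  exact Real.log_le_log hpos (hL.2 hr)
end

section
/- Let α ∈ (1,∞) and let D ∈ M_n(ℂ) be positive semidefinite with tr D = 1. Then tr(D^α) equals the maximum, over all finite resolutions of identity (p_1,…,p_k) in M_n(ℂ), of Σ_{i=1}^k (tr(p_i D))^α / (tr(p_i))^{α−1}. Consequently, the Rényi entropy R_α := (1/(α−1)) log tr(D^α) satisfies R_α = (1/(α−1)) · max over such resolutions of log Σ_{i=1}^k (tr(p_i D))^α / (tr(p_i))^{α−1}. -/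
open scoped Matrix ComplexOrder

lemma renyi_aux_jensen {ι : Type*} [Fintype ι] {α : ℝ} (hα : 1 < α) (w l : ι → ℝ)
    (hw : ∀ j, 0 ≤ w j) (hl : ∀ j, 0 ≤ l j) :
    (∑ j, w j * l j) ^ α / (∑ j, w j) ^ (α - 1) ≤ ∑ j, w j * l j ^ α := by
  have hW : 0 ≤ ∑ j, w j := Finset.sum_nonneg fun j _ => hw j
  have hR : 0 ≤ ∑ j, w j * l j ^ α :=
    Finset.sum_nonneg fun j _ => mul_nonneg (hw j) (Real.rpow_nonneg (hl j) _)
  rcases hW.eq_or_lt with h0 | hpos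
  · rw [← h0, Real.zero_rpow (by linarith)]
    simpa using hR
  · have hJ := Real.rpow_arith_mean_le_arith_mean_rpow Finset.univ
      (fun j => w j / ∑ j, w j) l (fun j _ => div_nonneg (hw j) hW)
      (by rw [← Finset.sum_div, div_self hpos.ne']) (fun j _ => hl j) hα.le
    have e1 : ∑ j, w j / (∑ j, w j) * l j = (∑ j, w j * l j) / ∑ j, w j := by
      rw [Finset.sum_div]; exact Finset.sum_congr rfl fun j _ => by ring
    have e2 : ∑ j, w j / (∑ j, w j) * l j ^ α = (∑ j, w j * l j ^ α) / ∑ j, w j := by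
      rw [Finset.sum_div]; exact Finset.sum_congr rfl fun j _ => by ring
    rw [e1, e2, Real.div_rpow (Finset.sum_nonneg fun j _ => mul_nonneg (hw j) (hl j)) hW] at hJ
    rw [Real.rpow_sub_one hpos.ne']
    have hWa : 0 < (∑ j, w j) ^ α := Real.rpow_pos_of_pos hpos _
    rw [div_le_div_iff₀ hWa hpos] at hJ
    rw [div_le_iff₀ (div_pos hWa hpos), ← mul_div_assoc, le_div_iff₀ hpos]
    exact hJ

lemma renyi_aux_w {n : ℕ} (D : Matrix (Fin n) (Fin n) ℂ) (hD : D.PosSemidef)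
    (htr : D.trace = 1) {k : ℕ} (p : Fin k → Matrix (Fin n) (Fin n) ℂ)
    (h1 : ∀ i, (p i).IsHermitian) (h2 : ∀ i, p i * p i = p i) (h3 : ∑ i, p i = 1) :
    ∃ w : Fin k → Fin n → ℝ, (∀ i j, 0 ≤ w i j) ∧ (∀ j, ∑ i, w i j = 1) ∧
      (∀ i, (Matrix.trace (p i * D)).re = ∑ j, w i j * hD.1.eigenvalues j) ∧
      (∀ i, (Matrix.trace (p i)).re = ∑ j, w i j) ∧ ∑ j, hD.1.eigenvalues j = 1 := by
  set U : Matrix (Fin n) (Fin n) ℂ := (hD.1.eigenvectorUnitary : Matrix (Fin n) (Fin n) ℂ) with hU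
  have hUU : Uᴴ * U = 1 := by
    rw [← Matrix.star_eq_conjTranspose]; exact Unitary.coe_star_mul_self _
  have hUU' : U * Uᴴ = 1 := by
    rw [← Matrix.star_eq_conjTranspose]; exact Unitary.coe_mul_star_self _
  have hs : D = U * Matrix.diagonal (fun j => (hD.1.eigenvalues j : ℂ)) * Uᴴ := by
    have := hD.1.spectral_theorem
    simpa [Unitary.conjStarAlgAut_apply, Matrix.star_eq_conjTranspose, Function.comp_def] using this
  refine ⟨fun i j => ((Uᴴ * p i * U) j j).re, ?_, ?_, ?_, ?_, ?_⟩
  · intro i j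
    have hp : (p i).PosSemidef := by
      have := Matrix.posSemidef_conjTranspose_mul_self (p i)
      rwa [(h1 i).eq, h2 i] at this
    have := (hp.conjTranspose_mul_mul_same U).diag_nonneg (i := j)
    exact (Complex.le_def.1 this).1
  · intro j
    have : ∑ i, Uᴴ * p i * U = 1 := by
      rw [← Finset.sum_mul, ← Finset.mul_sum, h3, mul_one, hUU]
    have h := congrArg (fun M : Matrix (Fin n) (Fin n) ℂ => (M j j).re) this
    simpa [Matrix.sum_apply] using h
  · intro i
    have : Matrix.trace (p i * D) =
        Matrix.trace ((Uᴴ * p i * U) * Matrix.diagonal (fun j => (hD.1.eigenvalues j : ℂ))) := by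
      conv_lhs => rw [hs, ← mul_assoc, Matrix.trace_mul_comm]
      simp only [mul_assoc]
    rw [this]
    simp [Matrix.trace, Matrix.mul_diagonal]
  · intro i
    have : Matrix.trace (p i) = Matrix.trace (Uᴴ * p i * U) := by
      rw [Matrix.trace_mul_comm, ← mul_assoc, hUU', one_mul]
    rw [this]
    simp [Matrix.trace]
  · have := hD.1.trace_eq_sum_eigenvalues
    rw [htr] at this
    have h := congrArg Complex.re this
    simpa using h.symm

lemma renyi_aux_bound {n : ℕ} {α : ℝ} (hα : 1 < α)
    (D : Matrix (Fin n) (Fin n) ℂ) (hD : D.PosSemidef)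
    (htr : D.trace = 1) {k : ℕ} (p : Fin k → Matrix (Fin n) (Fin n) ℂ)
    (h1 : ∀ i, (p i).IsHermitian) (h2 : ∀ i, p i * p i = p i) (h3 : ∑ i, p i = 1) :
    0 < ∑ i, (Matrix.trace (p i * D)).re ^ α / (Matrix.trace (p i)).re ^ (α - 1) ∧
    ∑ i, (Matrix.trace (p i * D)).re ^ α / (Matrix.trace (p i)).re ^ (α - 1) ≤
      ∑ i, hD.1.eigenvalues i ^ α := by
  obtain ⟨w, hw, hw1, hpD, hp, hsum⟩ := renyi_aux_w D hD htr p h1 h2 h3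
  have hl := hD.eigenvalues_nonneg
  simp only [hpD, hp]
  have hnum : ∀ i, 0 ≤ ∑ j, w i j * hD.1.eigenvalues j := fun i =>
    Finset.sum_nonneg fun j _ => mul_nonneg (hw i j) (hl j)
  have hW : ∀ i, 0 ≤ ∑ j, w i j := fun i => Finset.sum_nonneg fun j _ => hw i j
  constructor
  · have htot : ∑ i, ∑ j, w i j * hD.1.eigenvalues j = 1 := by
      rw [Finset.sum_comm]
      simp only [← Finset.sum_mul, hw1, one_mul, hsum]
    obtain ⟨i, -, hi⟩ : ∃ i ∈ Finset.univ, 0 < ∑ j, w i j * hD.1.eigenvalues j := by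
      apply Finset.exists_lt_of_sum_lt
      simp [htot]
    have hWi : 0 < ∑ j, w i j := by
      refine (hW i).lt_of_ne fun h0 => ?_
      have hz := (Finset.sum_eq_zero_iff_of_nonneg fun j _ => hw i j).1 h0.symm
      rw [Finset.sum_eq_zero fun j hj => by rw [hz j hj, zero_mul]] at hi
      exact lt_irrefl _ hi
    refine Finset.sum_pos' (fun i _ => div_nonneg (Real.rpow_nonneg (hnum i) _)
      (Real.rpow_nonneg (hW i) _)) ⟨i, Finset.mem_univ _, ?_⟩
    exact div_pos (Real.rpow_pos_of_pos hi _) (Real.rpow_pos_of_pos hWi _)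
  · calc _ ≤ ∑ i, ∑ j, w i j * hD.1.eigenvalues j ^ α :=
        Finset.sum_le_sum fun i _ => renyi_aux_jensen hα (w i) _ (hw i) hl
      _ = _ := by
        rw [Finset.sum_comm]
        simp only [← Finset.sum_mul, hw1, one_mul]

lemma renyi_aux_attain {n : ℕ} {α : ℝ}
    (D : Matrix (Fin n) (Fin n) ℂ) (hD : D.PosSemidef) :
    ∃ (k : ℕ) (p : Fin k → Matrix (Fin n) (Fin n) ℂ),
        (∀ i, (p i).IsHermitian) ∧ (∀ i, p i * p i = p i) ∧ (∀ i, p i ≠ 0) ∧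
        (∀ i j, i ≠ j → p i * p j = 0) ∧ (∑ i, p i = 1) ∧
        (∑ i, hD.1.eigenvalues i ^ α) =
          ∑ i, (Matrix.trace (p i * D)).re ^ α / (Matrix.trace (p i)).re ^ (α - 1) := by
  set U : Matrix (Fin n) (Fin n) ℂ := (hD.1.eigenvectorUnitary : Matrix (Fin n) (Fin n) ℂ) with hU
  have hUU : Uᴴ * U = 1 := by
    rw [← Matrix.star_eq_conjTranspose]; exact Unitary.coe_star_mul_self _
  have hUU' : U * Uᴴ = 1 := by
    rw [← Matrix.star_eq_conjTranspose]; exact Unitary.coe_mul_star_self _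
  have hs : D = U * Matrix.diagonal (fun j => (hD.1.eigenvalues j : ℂ)) * Uᴴ := by
    have := hD.1.spectral_theorem
    simpa [Unitary.conjStarAlgAut_apply, Matrix.star_eq_conjTranspose, Function.comp_def] using this
  have hmul : ∀ A B : Matrix (Fin n) (Fin n) ℂ, (U * A * Uᴴ) * (U * B * Uᴴ) = U * (A * B) * Uᴴ := by
    intro A B
    calc _ = U * A * (Uᴴ * U) * B * Uᴴ := by simp only [mul_assoc]
      _ = _ := by rw [hUU, mul_one]; simp only [mul_assoc]
  have htrc : ∀ A : Matrix (Fin n) (Fin n) ℂ, (U * A * Uᴴ).trace = A.trace := by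
    intro A
    rw [Matrix.trace_mul_comm, ← mul_assoc, hUU, one_mul]
  have ht1 : ∀ i, (U * Matrix.single i i (1 : ℂ) * Uᴴ).trace = 1 := by
    intro i; rw [htrc]; simp
  refine ⟨n, fun i => U * Matrix.single i i (1 : ℂ) * Uᴴ, ?_, ?_, ?_, ?_, ?_, ?_⟩
  · intro i
    apply Matrix.isHermitian_mul_mul_conjTranspose
    simp [Matrix.IsHermitian]
  · intro i
    rw [hmul]; simp
  · intro i h
    have := ht1 i
    beta_reduce at h
    rw [h] at this
    simp at this
  · intro i j hij
    rw [hmul]; simp [Matrix.single_mul_single_of_ne, hij]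
  · rw [← Finset.sum_mul, ← Finset.mul_sum]
    have : ∑ i : Fin n, Matrix.single i i (1 : ℂ) = 1 := by
      ext a b
      simp [Matrix.sum_apply, Matrix.single_apply, Matrix.one_apply, ite_and]
    rw [this, mul_one, hUU']
  · refine Finset.sum_congr rfl fun i _ => ?_
    have ht2 : (U * Matrix.single i i (1 : ℂ) * Uᴴ * D).trace = (hD.1.eigenvalues i : ℂ) := by
      conv_lhs => rw [hs]
      rw [hmul, htrc]
      simp [Matrix.trace, Matrix.mul_diagonal, Matrix.single_apply]
    rw [ht1, ht2]
    simp

/-- Variational formula for `tr(D^α)`, `α ∈ (1,∞)`, for a density matrix `D` (`D ≥ 0`,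
`tr D = 1`): `tr(D^α)` is the maximum over finite resolutions of identity `(p_1,…,p_k)` of
`Σ_i tr(p_i D)^α / tr(p_i)^{α−1}`; consequently, the Rényi entropy
`R_α = (1/(α−1)) log tr(D^α)` equals `(1/(α−1))` times the maximum of the logs of these sums.
Here `tr(D^α)` is expressed spectrally as `Σ_i λ_i^α` over the eigenvalues `λ_i` of `D`. -/
theorem renyi_entropy_gt_one_resolution_variational {n : ℕ} {α : ℝ}
    (hα : α ∈ Set.Ioi (1 : ℝ))
    (D : Matrix (Fin n) (Fin n) ℂ) (hD : D.PosSemidef) (htr : D.trace = 1) :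
    IsGreatest
      {r : ℝ | ∃ (k : ℕ) (p : Fin k → Matrix (Fin n) (Fin n) ℂ),
        (∀ i, (p i).IsHermitian) ∧ (∀ i, p i * p i = p i) ∧ (∀ i, p i ≠ 0) ∧
        (∀ i j, i ≠ j → p i * p j = 0) ∧ (∑ i, p i = 1) ∧
        r = ∑ i, (Matrix.trace (p i * D)).re ^ α / (Matrix.trace (p i)).re ^ (α - 1)}
      (∑ i, hD.1.eigenvalues i ^ α) ∧
    (1 / (α - 1)) * Real.log (∑ i, hD.1.eigenvalues i ^ α) =
      (1 / (α - 1)) * sSup (Real.log ''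
        {r : ℝ | ∃ (k : ℕ) (p : Fin k → Matrix (Fin n) (Fin n) ℂ),
          (∀ i, (p i).IsHermitian) ∧ (∀ i, p i * p i = p i) ∧ (∀ i, p i ≠ 0) ∧
          (∀ i j, i ≠ j → p i * p j = 0) ∧ (∑ i, p i = 1) ∧
          r = ∑ i, (Matrix.trace (p i * D)).re ^ α / (Matrix.trace (p i)).re ^ (α - 1)}) := by
  have hα1 : 1 < α := hα
  refine ⟨⟨renyi_aux_attain D hD, ?_⟩, ?_⟩
  · rintro _ ⟨k, p, h1, h2, -, -, h3, rfl⟩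
    exact (renyi_aux_bound hα1 D hD htr p h1 h2 h3).2
  · congr 1
    symm
    apply IsGreatest.csSup_eq
    refine ⟨⟨_, renyi_aux_attain D hD, rfl⟩, ?_⟩
    rintro _ ⟨r, ⟨k, p, h1, h2, -, -, h3, rfl⟩, rfl⟩
    obtain ⟨ha, hb⟩ := renyi_aux_bound hα1 D hD htr p h1 h2 h3
    exact Real.log_le_log ha hb
end

section
/- Let (X, 𝒜, μ) be a measure space with μ σ-finite, and let ρ : X → [0,∞) be measurable with ∫ ρ dμ = 1 and ρ log ρ ∈ L¹(μ) (convention 0·log 0 = 0). Then ∫ ρ log ρ dμ = sup over all measurable functions h : X → ℝ such that ρh ∈ L¹(μ) and e^h ∈ L¹(μ) of the quantity ∫ ρ h dμ − log ∫ e^h dμ. (This is the commutative instance, for the semifinite von Neumann algebra L^∞(μ) with trace ∫ · dμ, of the variational formula for Segal entropy over self-adjoint operators affiliated with the algebra.) -/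
open MeasureTheory

/-- Gibbs variational principle over a σ-finite measure space: if `ρ ≥ 0`, `∫ ρ dμ = 1` and
`ρ log ρ ∈ L¹(μ)` (with `0 log 0 = 0`, automatic since `Real.log 0 = 0`), then
`∫ ρ log ρ dμ = sup { ∫ ρ h dμ − log ∫ e^h dμ : h measurable, ρh ∈ L¹(μ), e^h ∈ L¹(μ) }`. -/
theorem entropy_gibbs_variational_sigmaFinite
    {X : Type*} [MeasurableSpace X] (μ : Measure X) [SigmaFinite μ]
    (ρ : X → ℝ) (hρ_meas : Measurable ρ) (hρ_nonneg : ∀ x, 0 ≤ ρ x)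
    (hρ_int : ∫ x, ρ x ∂μ = 1)
    (hent : Integrable (fun x => ρ x * Real.log (ρ x)) μ) :
    IsLUB
      {r : ℝ | ∃ h : X → ℝ, Measurable h ∧
        Integrable (fun x => ρ x * h x) μ ∧ Integrable (fun x => Real.exp (h x)) μ ∧
        r = ∫ x, ρ x * h x ∂μ - Real.log (∫ x, Real.exp (h x) ∂μ)}
      (∫ x, ρ x * Real.log (ρ x) ∂μ) := by
  have hρi : Integrable ρ μ := by
    by_contra hc
    rw [integral_undef hc] at hρ_int
    exact zero_ne_one hρ_int
  have hμ : NeZero μ := ⟨by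
    rintro rfl
    simp at hρ_int⟩
  constructor
  · rintro r ⟨h, hm, h1, h2, rfl⟩
    have hZ : 0 < ∫ x, Real.exp (h x) ∂μ := integral_exp_pos h2
    set Z := ∫ x, Real.exp (h x) ∂μ with hZdef
    have key : ∀ x, ρ x * h x - Real.log Z * ρ x ≤
        ρ x * Real.log (ρ x) + (Real.exp (h x) / Z - ρ x) := by
      intro x
      rcases (hρ_nonneg x).eq_or_lt with h0 | h0
      · rw [← h0]
        have : 0 ≤ Real.exp (h x) / Z := by positivity
        simpa using this
      · have h3 : 0 < Real.exp (h x) / Z / ρ x := by positivity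
        have h4 := Real.log_le_sub_one_of_pos h3
        rw [Real.log_div (by positivity) h0.ne', Real.log_div (by positivity) hZ.ne',
          Real.log_exp] at h4
        have h5 := mul_le_mul_of_nonneg_left h4 h0.le
        have h6 : ρ x * (Real.exp (h x) / Z / ρ x - 1) = Real.exp (h x) / Z - ρ x := by
          field_simp
        rw [h6] at h5
        linarith
    have i1 : Integrable (fun x => Real.log Z * ρ x) μ := hρi.const_mul _
    have i2 : Integrable (fun x => Real.exp (h x) / Z) μ := h2.div_const _
    have i3 : Integrable (fun x => Real.exp (h x) / Z - ρ x) μ := i2.sub hρi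
    have := integral_mono (h1.sub i1) (hent.add i3) key
    simp only [Pi.sub_apply, Pi.add_apply] at this
    rw [integral_sub h1 i1, integral_add hent i3, integral_sub i2 hρi, integral_const_mul,
      integral_div, hρ_int, ← hZdef, div_self hZ.ne'] at this
    linarith
  · intro b hb
    refine le_of_forall_pos_le_add fun ε hε => ?_
    obtain ⟨g, hg0, hgm, hg⟩ := exists_pos_lintegral_lt_of_sigmaFinite μ
      (ENNReal.ofReal_pos.2 hε).ne'
    have hgi : Integrable (fun x => (g x : ℝ)) μ := by
      refine ⟨hgm.coe_nnreal_real.aestronglyMeasurable, ?_⟩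
      simpa [HasFiniteIntegral] using hg.trans ENNReal.ofReal_lt_top
    have hgle : ∫ x, (g x : ℝ) ∂μ ≤ ε := by
      rw [integral_eq_lintegral_of_nonneg_ae (Filter.Eventually.of_forall fun x => NNReal.coe_nonneg (g x))
        hgi.aestronglyMeasurable]
      simp only [ENNReal.ofReal_coe_nnreal]
      exact ENNReal.toReal_le_of_le_ofReal hε.le hg.le
    let h : X → ℝ := fun x => if ρ x = 0 then Real.log (g x) else Real.log (ρ x)
    have hm : Measurable h := Measurable.ite (hρ_meas (measurableSet_singleton 0))
      hgm.coe_nnreal_real.log hρ_meas.log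
    have e1 : (fun x => ρ x * h x) = fun x => ρ x * Real.log (ρ x) := by
      funext x
      by_cases h0 : ρ x = 0 <;> simp [h, h0]
    have e2 : ∀ x, Real.exp (h x) ≤ ρ x + g x := by
      intro x
      by_cases h0 : ρ x = 0
      · simp [h, h0, Real.exp_log (NNReal.coe_pos.2 (hg0 x))]
      · simp [h, h0, Real.exp_log (lt_of_le_of_ne (hρ_nonneg x) (Ne.symm h0))]
    have i2 : Integrable (fun x => Real.exp (h x)) μ := by
      refine (hρi.add hgi).mono' hm.exp.aestronglyMeasurable
        (Filter.Eventually.of_forall fun x => ?_)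
      simpa [abs_of_pos (Real.exp_pos _)] using e2 x
    have hZ : 0 < ∫ x, Real.exp (h x) ∂μ := integral_exp_pos i2
    have hle : ∫ x, Real.exp (h x) ∂μ ≤ 1 + ε := by
      have := integral_mono i2 (hρi.add hgi) e2
      simp only [Pi.add_apply] at this
      rw [integral_add hρi hgi, hρ_int] at this
      linarith
    have hlog := Real.log_le_sub_one_of_pos hZ
    have := hb ⟨h, hm, e1 ▸ hent, i2, rfl⟩
    rw [e1] at this
    linarith
end

section
/- Let (X, 𝒜, μ) be a measure space with μ σ-finite, let g : X → [0,∞) be integrable, and let f : [0,∞) → ℝ be a continuous convex function with f(0) = 0 and f ∘ g ∈ L¹(μ). Then ∫ f ∘ g dμ = sup over all countable measurable partitions (A_i)_{i∈ℕ} of X into sets of finite measure of Σ_i f(α_i) μ(A_i), where α_i = μ(A_i)⁻¹ ∫_{A_i} g dμ and summands with μ(A_i) = 0 are taken to be 0. -/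
open MeasureTheory

lemma aux_cover (F : ℝ → ℝ) (hF : Continuous F) (d : ℝ) (hd : 0 < d) :
    ∃ U : ℕ → Set ℝ, (∀ n, IsClosed (U n)) ∧ (∀ n, Convex ℝ (U n)) ∧
      (∀ n, ∀ s ∈ U n, ∀ t ∈ U n, |F s - F t| ≤ d) ∧ (⋃ n, U n) = Set.univ := by
  have h1 : ∀ t : ℝ, ∃ r > 0, ∀ s ∈ Metric.closedBall t r, |F s - F t| ≤ d / 2 := by
    intro t
    obtain ⟨r, hr, h⟩ := Metric.continuous_iff.1 hF t (d / 2) (by positivity)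
    refine ⟨r / 2, by positivity, fun s hs => ?_⟩
    have := h s (lt_of_le_of_lt (Metric.mem_closedBall.1 hs) (by linarith))
    rw [Real.dist_eq] at this
    exact this.le
  choose r hr h using h1
  obtain ⟨s, hs, hsU⟩ := TopologicalSpace.countable_cover_nhds
    (f := fun t => Metric.closedBall t (r t)) (fun t => Metric.closedBall_mem_nhds t (hr t))
  have hne : s.Nonempty := by
    by_contra hcon
    rw [Set.not_nonempty_iff_eq_empty] at hcon
    subst hcon
    simp at hsU
    exact Set.empty_ne_univ hsU
  obtain ⟨e, rfl⟩ := hs.exists_eq_range hne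
  refine ⟨fun n => Metric.closedBall (e n) (r (e n)), fun n => Metric.isClosed_closedBall,
    fun n => convex_closedBall _ _, fun n a ha b hb => ?_, by simpa using hsU⟩
  have h1 := abs_le.1 (h _ a ha)
  have h2 := abs_le.1 (h _ b hb)
  rw [abs_le]
  constructor <;> linarith

lemma aux_jensen {X : Type*} [MeasurableSpace X] (μ : Measure X)
    (g : X → ℝ) (hg_nonneg : ∀ x, 0 ≤ g x) (hg_int : Integrable g μ)
    (f : ℝ → ℝ) (hf_cont : ContinuousOn f (Set.Ici 0)) (hf_conv : ConvexOn ℝ (Set.Ici 0) f)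
    (hfg_int : Integrable (fun x => f (g x)) μ) (A : Set X) (hA : μ A < ⊤) :
    f (((μ A).toReal)⁻¹ * ∫ x in A, g x ∂μ) * (μ A).toReal ≤ ∫ x in A, f (g x) ∂μ := by
  by_cases h0 : μ A = 0
  · simp [h0, Measure.restrict_eq_zero.2 h0]
  have hpos : 0 < (μ A).toReal := ENNReal.toReal_pos h0 hA.ne
  have := hf_conv.map_set_average_le hf_cont isClosed_Ici h0 hA.ne
    (Filter.Eventually.of_forall hg_nonneg) hg_int.integrableOn hfg_int.integrableOn
  simp only [setAverage_eq, smul_eq_mul, Measure.real] at this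
  rw [inv_mul_eq_div, inv_mul_eq_div] at this
  rw [inv_mul_eq_div]
  exact (le_div_iff₀ hpos).1 this

lemma aux_lower {X : Type*} [MeasurableSpace X] (μ : Measure X)
    (g : X → ℝ) (hg_nonneg : ∀ x, 0 ≤ g x) (hg_int : Integrable g μ)
    (f : ℝ → ℝ) 
    (hfg_int : Integrable (fun x => f (g x)) μ) (A : Set X) (hAm : MeasurableSet A)
    (hA : μ A < ⊤)
    (w : X → ℝ) (hw : Integrable w μ) (d : ℝ) (hwd : ∀ x ∈ A, d ≤ w x)
    (U : Set ℝ) (hUc : IsClosed U) (hU : Convex ℝ U)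
    (hosc : ∀ s ∈ U, ∀ t ∈ U, |f (max s 0) - f (max t 0)| ≤ d)
    (hgU : ∀ᵐ x ∂μ, x ∈ A → g x ∈ U) :
    ∫ x in A, f (g x) ∂μ - ∫ x in A, w x ∂μ ≤
      f (((μ A).toReal)⁻¹ * ∫ x in A, g x ∂μ) * (μ A).toReal := by
  by_cases h0 : μ A = 0
  · simp [h0, Measure.restrict_eq_zero.2 h0]
  have hgU' : ∀ᵐ x ∂(μ.restrict A), g x ∈ U := (ae_restrict_iff' hAm).2 hgU
  have hm := hU.set_average_mem hUc h0 hA.ne hgU' hg_int.integrableOn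
  simp only [setAverage_eq, smul_eq_mul, Measure.real] at hm
  set a := ((μ A).toReal)⁻¹ * ∫ x in A, g x ∂μ with ha
  have ha0 : 0 ≤ a := mul_nonneg (by positivity) (integral_nonneg hg_nonneg)
  have hc : ∫ x in A, f a ∂μ = f a * (μ A).toReal := by
    simp [Measure.real, mul_comm]
  rw [← hc, ← integral_sub hfg_int.integrableOn hw.integrableOn]
  refine integral_mono_ae (hfg_int.integrableOn.sub hw.integrableOn)
    (integrableOn_const hA.ne) ?_
  filter_upwards [hgU', ae_restrict_mem hAm] with x hx hxA
  have := abs_le.1 (hosc _ hx _ hm)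
  rw [max_eq_left ha0, max_eq_left (hg_nonneg x)] at this
  have := hwd x hxA
  linarith

lemma aux_partition {X : Type*} [MeasurableSpace X] (μ : Measure X) [SigmaFinite μ]
    (g : X → ℝ) (hg_nonneg : ∀ x, 0 ≤ g x) (hg_int : Integrable g μ)
    (f : ℝ → ℝ) (hf_cont : ContinuousOn f (Set.Ici 0))
    (hfg_int : Integrable (fun x => f (g x)) μ) (ε : ℝ) (hε : 0 < ε) :
    ∃ (A : ℕ → Set X) (w : X → ℝ), Integrable w μ ∧ ∫ x, w x ∂μ ≤ ε ∧
      (∀ i, MeasurableSet (A i)) ∧ Pairwise (Function.onFun Disjoint A) ∧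
      (⋃ i, A i) = Set.univ ∧ (∀ i, μ (A i) < ⊤) ∧
      ∀ i, ∫ x in A i, f (g x) ∂μ - ∫ x in A i, w x ∂μ ≤
        f (((μ (A i)).toReal)⁻¹ * ∫ x in A i, g x ∂μ) * (μ (A i)).toReal := by
  have hF : Continuous (fun t : ℝ => f (max t 0)) :=
    hf_cont.comp_continuous (by fun_prop) (fun t => Set.mem_Ici.2 (le_max_right _ _))
  obtain ⟨w, hw0, hwm, hwε⟩ := exists_pos_lintegral_lt_of_sigmaFinite μ
    (ε := ENNReal.ofReal ε) (by simpa using hε)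
  have hwi : Integrable (fun x => (w x : ℝ)) μ := by
    refine ⟨hwm.coe_nnreal_real.aestronglyMeasurable, ?_⟩
    rw [hasFiniteIntegral_iff_enorm]
    simpa using hwε.trans ENNReal.ofReal_lt_top
  have hdpos : ∀ k : ℕ, (0 : ℝ) < 1 / ((k : ℝ) + 1) := fun k => by positivity
  choose U hUc hU hosc hUu using fun k : ℕ => aux_cover _ hF _ (hdpos k)
  set h := hg_int.1.mk g with hh
  have hhm : Measurable h := hg_int.1.stronglyMeasurable_mk.measurable
  have hgh : g =ᵐ[μ] h := hg_int.1.ae_eq_mk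
  let C : ℕ → Set X := fun m =>
    {x | 1 / (((m.unpair).1 : ℝ) + 1) ≤ (w x : ℝ)} ∩ h ⁻¹' (U m.unpair.1 m.unpair.2)
  have hCm : ∀ m, MeasurableSet (C m) := fun m =>
    (measurableSet_le measurable_const hwm.coe_nnreal_real).inter (hhm (hUc _ _).measurableSet)
  have hCu : (⋃ m, C m) = Set.univ := by
    refine Set.eq_univ_of_forall fun x => Set.mem_iUnion.2 ?_
    obtain ⟨k, hk⟩ := exists_nat_one_div_lt (show (0 : ℝ) < w x from hw0 x)
    have : h x ∈ ⋃ n, U k n := by rw [hUu]; trivial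
    obtain ⟨n, hn⟩ := Set.mem_iUnion.1 this
    refine ⟨Nat.pair k n, ?_, ?_⟩
    · simpa using hk.le
    · simpa using hn
  have hsub : ∀ i, disjointed C i ⊆ C i := fun i => disjointed_subset C i
  have hfin : ∀ i, μ (disjointed C i) < ⊤ := by
    intro i
    refine lt_of_le_of_lt (measure_mono ((hsub i).trans Set.inter_subset_left)) ?_
    exact hwi.measure_ge_lt_top (hdpos _)
  refine ⟨disjointed C, fun x => (w x : ℝ), hwi, ?_, MeasurableSet.disjointed hCm,
    disjoint_disjointed C, by rw [iUnion_disjointed, hCu], hfin, fun i => ?_⟩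
  · beta_reduce
    rw [integral_eq_lintegral_of_nonneg_ae (Filter.Eventually.of_forall fun x => NNReal.coe_nonneg (w x))
      hwi.1]
    refine ENNReal.toReal_le_of_le_ofReal hε.le ?_
    simpa using hwε.le
  · refine aux_lower μ g hg_nonneg hg_int f hfg_int _ (MeasurableSet.disjointed hCm i)
      (hfin i) _ hwi _ (fun x hx => (hsub i hx).1) _ (hUc i.unpair.1 i.unpair.2) (hU _ _)
      (hosc _ _) ?_
    filter_upwards [hgh] with x hx hxA
    rw [hx]
    exact (hsub i hxA).2

/-- Variational formula over countable partitions (commutative, convex case): for σ-finite `μ`,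
`g ≥ 0` integrable and `f` continuous convex on `[0,∞)` with `f(0) = 0` and `f ∘ g ∈ L¹(μ)`,
`∫ f ∘ g dμ` is the supremum, over countable measurable partitions `(A_i)` of `X` into sets of
finite measure, of `Σ_i f(α_i) μ(A_i)` with `α_i = μ(A_i)⁻¹ ∫_{A_i} g dμ` (summands with
`μ(A_i) = 0` vanish automatically, as then `α_i = 0`, `f(0) = 0` and the factor `μ(A_i)` is 0). -/
theorem integral_convex_partition_variational
    {X : Type*} [MeasurableSpace X] (μ : Measure X) [SigmaFinite μ]
    (g : X → ℝ) (hg_nonneg : ∀ x, 0 ≤ g x) (hg_int : Integrable g μ)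
    (f : ℝ → ℝ) (hf_cont : ContinuousOn f (Set.Ici 0)) (hf_conv : ConvexOn ℝ (Set.Ici 0) f)
    (hf0 : f 0 = 0) (hfg_int : Integrable (fun x => f (g x)) μ) :
    IsLUB
      {r : ℝ | ∃ A : ℕ → Set X,
        (∀ i, MeasurableSet (A i)) ∧ Pairwise (Function.onFun Disjoint A) ∧
        (⋃ i, A i) = Set.univ ∧ (∀ i, μ (A i) < ⊤) ∧
        Summable (fun i =>
          f (((μ (A i)).toReal)⁻¹ * ∫ x in A i, g x ∂μ) * (μ (A i)).toReal) ∧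
        r = ∑' i, f (((μ (A i)).toReal)⁻¹ * ∫ x in A i, g x ∂μ) * (μ (A i)).toReal}
      (∫ x, f (g x) ∂μ) := by
  have key : ∀ (A : ℕ → Set X), (∀ i, MeasurableSet (A i)) →
      Pairwise (Function.onFun Disjoint A) → (⋃ i, A i) = Set.univ → ∀ u : X → ℝ,
      Integrable u μ → HasSum (fun i => ∫ x in A i, u x ∂μ) (∫ x, u x ∂μ) := by
    intro A hm hd hu u hui
    have := hasSum_integral_iUnion hm hd (f := u) (μ := μ) hui.integrableOn
    rwa [hu, setIntegral_univ] at this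
  constructor
  · rintro r ⟨A, hm, hd, hu, hfin, hs, rfl⟩
    have hS := key A hm hd hu _ hfg_int
    rw [← hS.tsum_eq]
    exact hs.tsum_le_tsum (fun i => aux_jensen μ g hg_nonneg hg_int f hf_cont hf_conv hfg_int
      (A i) (hfin i)) hS.summable
  · intro b hb
    refine le_of_forall_pos_le_add fun ε hε => ?_
    obtain ⟨A, w, hwi, hwε, hm, hd, hu, hfin, hlow⟩ :=
      aux_partition μ g hg_nonneg hg_int f hf_cont hfg_int ε hε
    have hS := key A hm hd hu _ hfg_int
    have hW := key A hm hd hu _ hwi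
    have hup := fun i => aux_jensen μ g hg_nonneg hg_int f hf_cont hf_conv hfg_int
      (A i) (hfin i)
    have hsum : Summable (fun i =>
        f (((μ (A i)).toReal)⁻¹ * ∫ x in A i, g x ∂μ) * (μ (A i)).toReal) := by
      have h1 : Summable (fun i => ∫ x in A i, f (g x) ∂μ -
          f (((μ (A i)).toReal)⁻¹ * ∫ x in A i, g x ∂μ) * (μ (A i)).toReal) :=
        Summable.of_nonneg_of_le (fun i => sub_nonneg.2 (hup i))
          (fun i => by linarith [hlow i]) hW.summable
      simpa using hS.summable.sub h1
    have hle := hb ⟨A, hm, hd, hu, hfin, hsum, rfl⟩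
    have h2 := hasSum_le hlow (hS.sub hW) hsum.hasSum
    linarith
end

section
/- Let (X, 𝒜, μ) be a measure space with μ σ-finite, let g : X → [0,∞) be integrable, and let f : [0,∞) → ℝ be a continuous concave function with f(0) = 0 and f ∘ g ∈ L¹(μ). Then ∫ f ∘ g dμ = inf over all countable measurable partitions (A_i)_{i∈ℕ} of X into sets of finite measure of Σ_i f(α_i) μ(A_i), where α_i = μ(A_i)⁻¹ ∫_{A_i} g dμ and summands with μ(A_i) = 0 are taken to be 0. -/
open MeasureTheory

/-- Countable cover of the line by closed balls on which `F` oscillates by at most `δ`. -/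
lemma exists_cover_osc (F : ℝ → ℝ) (hF : Continuous F) (δ : ℝ) (hδ : 0 < δ) :
    ∃ t r : ℕ → ℝ, (∀ y, ∃ k, y ∈ Metric.closedBall (t k) (r k)) ∧
      ∀ k, ∀ u ∈ Metric.closedBall (t k) (r k), ∀ v ∈ Metric.closedBall (t k) (r k),
        F u ≤ F v + δ := by
  have h1 : ∀ x : ℝ, ∃ r > 0, ∀ u ∈ Metric.closedBall x r, |F u - F x| < δ / 2 := by
    intro x
    obtain ⟨r, hr, h⟩ := Metric.continuous_iff.1 hF x (δ / 2) (by positivity)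
    refine ⟨r / 2, by positivity, fun u hu => ?_⟩
    have := h u (lt_of_le_of_lt (Metric.mem_closedBall.1 hu) (by linarith))
    rwa [Real.dist_eq] at this
  choose r hr h using h1
  obtain ⟨s, hs, hsu⟩ := TopologicalSpace.countable_cover_nhds
    (fun x => Metric.closedBall_mem_nhds x (hr x))
  have hne : s.Nonempty := by
    have : (0 : ℝ) ∈ ⋃ x ∈ s, Metric.closedBall x (r x) := by rw [hsu]; trivial
    simp only [Set.mem_iUnion] at this
    obtain ⟨i, hi, _⟩ := this
    exact ⟨i, hi⟩
  obtain ⟨t, rfl⟩ := hs.exists_eq_range hne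
  refine ⟨t, fun k => r (t k), fun y => ?_, fun k u hu v hv => ?_⟩
  · have : y ∈ ⋃ x ∈ Set.range t, Metric.closedBall x (r x) := by rw [hsu]; trivial
    simp only [Set.mem_iUnion, Set.mem_range] at this
    obtain ⟨_, ⟨k, rfl⟩, hk⟩ := this
    exact ⟨k, hk⟩
  · have a := abs_lt.1 (h (t k) u hu)
    have b := abs_lt.1 (h (t k) v hv)
    linarith [a.2, b.1]

/-- Variational formula over countable partitions (commutative, concave case): for σ-finite `μ`,
`g ≥ 0` integrable and `f` continuous concave on `[0,∞)` with `f(0) = 0` and `f ∘ g ∈ L¹(μ)`,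
`∫ f ∘ g dμ` is the infimum, over countable measurable partitions `(A_i)` of `X` into sets of
finite measure, of `Σ_i f(α_i) μ(A_i)` with `α_i = μ(A_i)⁻¹ ∫_{A_i} g dμ` (summands with
`μ(A_i) = 0` vanish automatically, as then `α_i = 0`, `f(0) = 0` and the factor `μ(A_i)` is 0). -/
theorem integral_concave_partition_variational
    {X : Type*} [MeasurableSpace X] (μ : Measure X) [SigmaFinite μ]
    (g : X → ℝ) (hg_nonneg : ∀ x, 0 ≤ g x) (hg_int : Integrable g μ)
    (f : ℝ → ℝ) (hf_cont : ContinuousOn f (Set.Ici 0)) (hf_conc : ConcaveOn ℝ (Set.Ici 0) f)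
    (hf0 : f 0 = 0) (hfg_int : Integrable (fun x => f (g x)) μ) :
    IsGLB
      {r : ℝ | ∃ A : ℕ → Set X,
        (∀ i, MeasurableSet (A i)) ∧ Pairwise (Function.onFun Disjoint A) ∧
        (⋃ i, A i) = Set.univ ∧ (∀ i, μ (A i) < ⊤) ∧
        Summable (fun i =>
          f (((μ (A i)).toReal)⁻¹ * ∫ x in A i, g x ∂μ) * (μ (A i)).toReal) ∧
        r = ∑' i, f (((μ (A i)).toReal)⁻¹ * ∫ x in A i, g x ∂μ) * (μ (A i)).toReal}
      (∫ x, f (g x) ∂μ) := by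
  have avg : ∀ A : Set X, (((μ A).toReal)⁻¹ * ∫ x in A, g x ∂μ) = ⨍ x in A, g x ∂μ := by
    intro A
    rw [setAverage_eq, smul_eq_mul, measureReal_def]
  have jensen : ∀ A : Set X, μ A < ⊤ → ∫ x in A, f (g x) ∂μ ≤
      f (((μ A).toReal)⁻¹ * ∫ x in A, g x ∂μ) * (μ A).toReal := by
    intro A hA
    by_cases h0 : μ A = 0
    · rw [Measure.restrict_eq_zero.2 h0]; simp [h0]
    have hpos : 0 < (μ A).toReal := ENNReal.toReal_pos h0 hA.ne
    have := hf_conc.le_map_set_average hf_cont isClosed_Ici h0 hA.ne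
      (Filter.Eventually.of_forall fun x => hg_nonneg x) hg_int.integrableOn
      (hfg_int.integrableOn (s := A))
    rw [← avg, setAverage_eq, smul_eq_mul, measureReal_def, inv_mul_le_iff₀ hpos] at this
    linarith
  constructor
  · rintro _ ⟨A, hAm, hAd, hAu, hAf, hs, rfl⟩
    have h := hasSum_integral_iUnion hAm hAd (hfg_int.integrableOn (s := ⋃ i, A i))
    rw [hAu, setIntegral_univ] at h
    exact hasSum_le (fun i => jensen _ (hAf i)) h hs.hasSum
  · intro b hb
    refine le_of_forall_pos_le_add fun ε hε => ?_
    obtain ⟨d, hd0, hdm, hdi⟩ := exists_pos_lintegral_lt_of_sigmaFinite μ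
      (ε := ENNReal.ofReal ε) (by simpa using hε)
    have hdint : Integrable (fun x => (d x : ℝ)) μ :=
      ⟨hdm.coe_nnreal_real.aestronglyMeasurable, by
        simpa [HasFiniteIntegral] using hdi.trans ENNReal.ofReal_lt_top⟩
    have hdle : ∫ x, (d x : ℝ) ∂μ ≤ ε := by
      rw [integral_eq_lintegral_of_nonneg_ae (Filter.Eventually.of_forall fun x => NNReal.coe_nonneg (d x))
        hdint.1]
      refine ENNReal.toReal_le_of_le_ofReal hε.le ?_
      simpa using hdi.le
    have hF : Continuous (fun t : ℝ => f (max t 0)) :=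
      hf_cont.comp_continuous (by fun_prop) (fun x => by simp)
    choose t r hcov hosc using fun m : ℕ =>
      exists_cover_osc _ hF (1 / ((m : ℝ) + 1)) (by positivity)
    obtain ⟨gm, hgmMeas, hggm⟩ := hg_int.1.aemeasurable
    let C : ℕ → Set X := fun i => {x | 1 / ((i.unpair.1 : ℝ) + 1) ≤ (d x : ℝ)} ∩
      {x | gm x ∈ Metric.closedBall (t i.unpair.1 i.unpair.2) (r i.unpair.1 i.unpair.2)}
    have hCm : ∀ i, MeasurableSet (C i) := fun i =>
      (measurableSet_le measurable_const hdm.coe_nnreal_real).inter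
        (hgmMeas Metric.isClosed_closedBall.measurableSet)
    have hCf : ∀ i, μ (C i) < ⊤ := by
      intro i
      refine lt_of_le_of_lt (measure_mono Set.inter_subset_left) ?_
      exact hdint.measure_ge_lt_top (by positivity)
    have hCu : (⋃ i, C i) = Set.univ := by
      refine Set.eq_univ_of_forall fun x => ?_
      obtain ⟨m, hm⟩ := exists_nat_one_div_lt (K := ℝ) (hd0 x)
      obtain ⟨k, hk⟩ := hcov m (gm x)
      refine Set.mem_iUnion.2 ⟨Nat.pair m k, ?_⟩
      simp only [C, Nat.unpair_pair]
      exact ⟨hm.le, hk⟩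
    let A := disjointed C
    have hAm : ∀ i, MeasurableSet (A i) := fun i => MeasurableSet.disjointed hCm i
    have hAd : Pairwise (Function.onFun Disjoint A) := disjoint_disjointed C
    have hAu : (⋃ i, A i) = Set.univ := by rw [← hCu]; exact iUnion_disjointed
    have hAC : ∀ i, A i ⊆ C i := fun i => disjointed_subset C i
    have hAf : ∀ i, μ (A i) < ⊤ := fun i => lt_of_le_of_lt (measure_mono (hAC i)) (hCf i)
    have hhint : Integrable (fun x => f (g x) + (d x : ℝ)) μ := hfg_int.add hdint
    have up : ∀ i, f (((μ (A i)).toReal)⁻¹ * ∫ x in A i, g x ∂μ) * (μ (A i)).toReal ≤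
        ∫ x in A i, (f (g x) + (d x : ℝ)) ∂μ := by
      intro i
      by_cases h0 : μ (A i) = 0
      · rw [Measure.restrict_eq_zero.2 h0]; simp [h0]
      have hgae : ∀ᵐ x ∂μ.restrict (A i), g x = gm x := ae_restrict_of_ae hggm
      have hmem : ∀ᵐ x ∂μ.restrict (A i), x ∈ A i := ae_restrict_mem (hAm i)
      have hα : (⨍ x in A i, g x ∂μ) ∈
          Metric.closedBall (t i.unpair.1 i.unpair.2) (r i.unpair.1 i.unpair.2) := by
        refine (convex_closedBall _ _).set_average_mem Metric.isClosed_closedBall h0 (hAf i).ne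
          ?_ hg_int.integrableOn
        filter_upwards [hgae, hmem] with x hx hxA
        rw [hx]; exact (hAC i hxA).2
      have hα0 : 0 ≤ (⨍ x in A i, g x ∂μ) := by
        rw [← avg]
        exact mul_nonneg (by positivity) (integral_nonneg hg_nonneg)
      rw [avg]
      have hc : f (⨍ x in A i, g x ∂μ) * (μ (A i)).toReal =
          ∫ x in A i, f (⨍ x in A i, g x ∂μ) ∂μ := by
        rw [setIntegral_const, measureReal_def, smul_eq_mul, mul_comm]
      rw [hc]
      refine integral_mono_ae (integrableOn_const (hAf i).ne) hhint.integrableOn ?_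
      filter_upwards [hgae, hmem] with x hx hxA
      have h1 := hosc _ _ _ hα (g x) (by rw [hx]; exact (hAC i hxA).2)
      simp only [max_eq_left hα0, max_eq_left (hg_nonneg x)] at h1
      have h2 := (hAC i hxA).1
      simp only [Set.mem_ofPred_eq] at h2
      linarith
    have hlo := hasSum_integral_iUnion hAm hAd (hfg_int.integrableOn (s := ⋃ i, A i))
    have hhi := hasSum_integral_iUnion hAm hAd (hhint.integrableOn (s := ⋃ i, A i))
    rw [hAu, setIntegral_univ] at hlo hhi
    have hsum : Summable (fun i =>
        f (((μ (A i)).toReal)⁻¹ * ∫ x in A i, g x ∂μ) * (μ (A i)).toReal) := by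
      have h1 := Summable.of_nonneg_of_le
        (fun i => sub_nonneg.2 (jensen _ (hAf i)))
        (fun i => sub_le_sub_right (up i) _) (hhi.summable.sub hlo.summable)
      simpa using h1.add hlo.summable
    have h1 := hb ⟨A, hAm, hAd, hAu, hAf, hsum, rfl⟩
    have h2 := hasSum_le up hsum.hasSum hhi
    rw [integral_add hfg_int hdint] at h2
    linarith
end

section
/- Let (X, 𝒜, μ) be a measure space with μ finite, let g : X → [0,∞) be integrable, and let f : [0,∞) → ℝ be a continuous convex function with f ∘ g ∈ L¹(μ). Then ∫ f ∘ g dμ = sup over all FINITE measurable partitions (A_1,…,A_k) of X of Σ_{i=1}^k f(α_i) μ(A_i), where α_i = μ(A_i)⁻¹ ∫_{A_i} g dμ and summands with μ(A_i) = 0 are taken to be 0. (For finite algebras the countable resolutions of identity in the variational formula may be replaced by finite ones.) -/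
open MeasureTheory

/-- index of the largest of the first `n + 1` functions, at a point -/
noncomputable def argmaxIdx (L : ℕ → ℝ → ℝ) : ℕ → ℝ → ℕ
  | 0, _ => 0
  | n + 1, y => if L (argmaxIdx L n y) y < L (n + 1) y then n + 1 else argmaxIdx L n y

lemma argmaxIdx_le (L : ℕ → ℝ → ℝ) (n : ℕ) (y : ℝ) : argmaxIdx L n y ≤ n := by
  induction n with
  | zero => simp [argmaxIdx]
  | succ n ih => rw [argmaxIdx]; split_ifs <;> omega

lemma le_argmaxIdx (L : ℕ → ℝ → ℝ) (n : ℕ) (y : ℝ) :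
    ∀ j ≤ n, L j y ≤ L (argmaxIdx L n y) y := by
  induction n with
  | zero => intro j hj; obtain rfl : j = 0 := by omega
            simp [argmaxIdx]
  | succ n ih =>
    intro j hj
    rw [argmaxIdx]
    rcases Nat.lt_or_ge n j with h | h
    · obtain rfl : j = n + 1 := by omega
      split_ifs with h2
      · exact le_rfl
      · exact not_lt.1 h2
    · have := ih j h
      split_ifs with h2
      · linarith
      · exact this

lemma measurable_argmaxIdx (L : ℕ → ℝ → ℝ) (hL : ∀ i, Measurable (L i)) (n : ℕ) :
    Measurable (argmaxIdx L n) ∧ Measurable (fun y => L (argmaxIdx L n y) y) := by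
  induction n with
  | zero => exact ⟨measurable_const, hL 0⟩
  | succ n ih =>
    have hs : MeasurableSet {y | L (argmaxIdx L n y) y < L (n + 1) y} :=
      measurableSet_lt ih.2 (hL _)
    refine ⟨?_, ?_⟩
    · have : argmaxIdx L (n + 1) = fun y => if L (argmaxIdx L n y) y < L (n + 1) y then n + 1
          else argmaxIdx L n y := by ext y; rw [argmaxIdx]
      rw [this]
      exact Measurable.ite hs measurable_const ih.1
    · have : (fun y => L (argmaxIdx L (n + 1) y) y) = fun y =>
          if L (argmaxIdx L n y) y < L (n + 1) y then L (n + 1) y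
          else L (argmaxIdx L n y) y := by
        ext y; rw [argmaxIdx]; split_ifs <;> rfl
      rw [this]
      exact Measurable.ite hs (hL _) ih.2

/-- Variational formula over finite partitions (finite measure, convex case): for a finite
measure `μ`, `g ≥ 0` integrable and `f` continuous convex on `[0,∞)` with `f ∘ g ∈ L¹(μ)`,
`∫ f ∘ g dμ` is the supremum, over finite measurable partitions `(A_1,…,A_k)` of `X`, of
`Σ_{i=1}^k f(α_i) μ(A_i)` with `α_i = μ(A_i)⁻¹ ∫_{A_i} g dμ` (summands with `μ(A_i) = 0`
vanish automatically since the factor `μ(A_i)` is 0). -/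
theorem integral_convex_finite_partition_variational
    {X : Type*} [MeasurableSpace X] (μ : Measure X) [IsFiniteMeasure μ]
    (g : X → ℝ) (hg_nonneg : ∀ x, 0 ≤ g x) (hg_int : Integrable g μ)
    (f : ℝ → ℝ) (hf_cont : ContinuousOn f (Set.Ici 0)) (hf_conv : ConvexOn ℝ (Set.Ici 0) f)
    (hfg_int : Integrable (fun x => f (g x)) μ) :
    IsLUB
      {r : ℝ | ∃ (k : ℕ) (A : Fin k → Set X),
        (∀ i, MeasurableSet (A i)) ∧ Pairwise (Function.onFun Disjoint A) ∧
        (⋃ i, A i) = Set.univ ∧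
        r = ∑ i, f (((μ (A i)).toReal)⁻¹ * ∫ x in A i, g x ∂μ) * (μ (A i)).toReal}
      (∫ x, f (g x) ∂μ) := by
  have hmean : ∀ A : Set X, 0 ≤ ((μ A).toReal)⁻¹ * ∫ x in A, g x ∂μ := fun A =>
    mul_nonneg (by positivity) (integral_nonneg fun x => hg_nonneg x)
  constructor
  · rintro r ⟨k, A, hA, hd, hU, rfl⟩
    have h1 : ∫ x, f (g x) ∂μ = ∑ i, ∫ x in A i, f (g x) ∂μ := by
      rw [← integral_iUnion_fintype hA hd (fun i => hfg_int.integrableOn), hU, setIntegral_univ]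
    rw [h1]
    refine Finset.sum_le_sum fun i _ => ?_
    by_cases h0 : μ (A i) = 0
    · simp [h0, Measure.restrict_eq_zero.2 h0]
    have hne : NeZero (μ.restrict (A i)) := ⟨by simpa using h0⟩
    have hpos : 0 < (μ (A i)).toReal := ENNReal.toReal_pos h0 (measure_ne_top _ _)
    have hJ := hf_conv.map_average_le (μ := μ.restrict (A i)) (f := g) hf_cont isClosed_Ici
      (Filter.Eventually.of_forall fun x => hg_nonneg x) hg_int.restrict hfg_int.restrict
    rw [setAverage_eq, setAverage_eq, smul_eq_mul, smul_eq_mul, Measure.real] at hJ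
    calc _ ≤ _ := mul_le_mul_of_nonneg_right hJ hpos.le
      _ = _ := by field_simp
  · intro b hb
    obtain ⟨l, c, hle, hsup⟩ := hf_conv.real_sSup_of_nat_affine_eq isClosed_Ici
      hf_cont.lowerSemicontinuousOn
    set L : ℕ → ℝ → ℝ := fun i y => l i y + c i with hLdef
    have hLle : ∀ i y, 0 ≤ y → L i y ≤ f y := fun i y hy => hle i ⟨y, hy⟩
    have hLsup : ∀ y, 0 ≤ y → ⨆ i, L i y = f y := fun y hy => by
      have := congrFun hsup ⟨y, hy⟩
      rw [iSup_apply] at this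
      exact this
    have hLm : ∀ i, Measurable (L i) := fun i => by
      have : Continuous (L i) := by fun_prop
      exact this.measurable
    have hlin : ∀ i y, l i y = l i 1 * y := fun i y => by
      have := (l i).map_smul y 1
      simp only [smul_eq_mul, mul_one] at this
      rw [this, mul_comm]
    have hLint : ∀ i, Integrable (fun x => L i (g x)) μ := fun i =>
      ((l i).integrable_comp hg_int).add (integrable_const _)
    set φ : ℕ → ℝ → ℝ := fun n y => L (argmaxIdx L n y) y with hφ
    have hφm : ∀ n, Measurable (φ n) := fun n => (measurable_argmaxIdx L hLm n).2
    have hφle : ∀ n y, 0 ≤ y → φ n y ≤ f y := fun n y hy => hLle _ y hy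
    have hφge : ∀ n y, L 0 y ≤ φ n y := fun n y => le_argmaxIdx L n y 0 (Nat.zero_le _)
    have hbd : ∀ n x, ‖φ n (g x)‖ ≤ ‖L 0 (g x)‖ + ‖f (g x)‖ := fun n x => by
      have h1 := hφle n _ (hg_nonneg x)
      have h2 := hφge n (g x)
      rw [Real.norm_eq_abs, Real.norm_eq_abs, Real.norm_eq_abs]
      refine abs_le.2 ⟨?_, ?_⟩
      · linarith [neg_abs_le (L 0 (g x)), abs_nonneg (f (g x))]
      · linarith [le_abs_self (f (g x)), abs_nonneg (L 0 (g x))]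
    have hφae : ∀ n, AEStronglyMeasurable (fun x => φ n (g x)) μ := fun n =>
      ((hφm n).comp_aemeasurable hg_int.aemeasurable).aestronglyMeasurable
    have hφint : ∀ n, Integrable (fun x => φ n (g x)) μ := fun n =>
      Integrable.mono' ((hLint 0).norm.add hfg_int.norm) (hφae n)
        (Filter.Eventually.of_forall (hbd n))
    have htend : Filter.Tendsto (fun n => ∫ x, φ n (g x) ∂μ) Filter.atTop
        (nhds (∫ x, f (g x) ∂μ)) := by
      refine tendsto_integral_of_dominated_convergence _ hφae
        ((hLint 0).norm.add hfg_int.norm) (fun n => Filter.Eventually.of_forall (hbd n))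
        (Filter.Eventually.of_forall fun x => ?_)
      have hy := hg_nonneg x
      refine tendsto_order.2 ⟨fun a ha => ?_, fun a ha => Filter.Eventually.of_forall
        fun n => (hφle n _ hy).trans_lt ha⟩
      rw [← hLsup _ hy] at ha
      obtain ⟨i, hi⟩ := exists_lt_of_lt_ciSup ha
      filter_upwards [Filter.eventually_ge_atTop i] with n hn
      exact hi.trans_le (le_argmaxIdx L n _ i hn)
    refine le_of_tendsto' htend fun n => ?_
    set h : X → ℝ := hg_int.aemeasurable.mk g with hh
    have hhm : Measurable h := hg_int.aemeasurable.measurable_mk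
    have hgh : g =ᵐ[μ] h := hg_int.aemeasurable.ae_eq_mk
    let A : Fin (n + 1) → Set X := fun i => {x | argmaxIdx L n (h x) = i}
    have hA : ∀ i, MeasurableSet (A i) := fun i =>
      ((measurable_argmaxIdx L hLm n).1.comp hhm) (measurableSet_singleton (i : ℕ))
    have hd : Pairwise (Function.onFun Disjoint A) := fun i j hij =>
      Set.disjoint_left.2 fun x hx hx' => hij (Fin.ext (hx.symm.trans hx'))
    have hU : (⋃ i, A i) = Set.univ := Set.eq_univ_of_forall fun x => Set.mem_iUnion.2
      ⟨⟨argmaxIdx L n (h x), Nat.lt_succ_of_le (argmaxIdx_le L n _)⟩, rfl⟩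
    refine le_trans ?_ (hb ⟨n + 1, A, hA, hd, hU, rfl⟩)
    have h1 : ∫ x, φ n (g x) ∂μ = ∑ i, ∫ x in A i, φ n (g x) ∂μ := by
      rw [← integral_iUnion_fintype hA hd (fun i => (hφint n).integrableOn), hU, setIntegral_univ]
    rw [h1]
    refine Finset.sum_le_sum fun i _ => ?_
    have h2 : ∫ x in A i, φ n (g x) ∂μ = ∫ x in A i, L i (g x) ∂μ := by
      refine setIntegral_congr_ae (hA i) ?_
      filter_upwards [hgh] with x hx hxA
      have : argmaxIdx L n (h x) = i := hxA
      simp only [hφ]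
      rw [hx, this]
    have h3 : ∫ x in A i, L i (g x) ∂μ = l i 1 * (∫ x in A i, g x ∂μ) + (μ (A i)).toReal * c i := by
      simp only [hLdef, hlin (i : ℕ) (g _)]
      rw [integral_add (hg_int.restrict.const_mul _) (integrable_const _), integral_const_mul]
      simp [Measure.real]
    rw [h2, h3]
    by_cases h0 : μ (A i) = 0
    · simp [h0, Measure.restrict_eq_zero.2 h0]
    have hpos : 0 < (μ (A i)).toReal := ENNReal.toReal_pos h0 (measure_ne_top _ _)
    refine le_trans (le_of_eq ?_) (mul_le_mul_of_nonneg_right (hLle i _ (hmean (A i))) hpos.le)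
    simp only [hLdef]
    rw [hlin i (_ * _)]
    field_simp
end

section
/- Let (X, 𝒜, μ) be a measure space with μ σ-finite, and let ρ : X → [0,∞) be measurable with ∫ ρ dμ = 1 and ρ log ρ ∈ L¹(μ) (convention 0·log 0 = 0). Then ∫ ρ log ρ dμ = sup over all countable measurable partitions (A_i)_{i∈ℕ} of X into sets of finite measure of Σ_i ω(A_i) (log ω(A_i) − log μ(A_i)), where ω(A_i) = ∫_{A_i} ρ dμ and summands with ω(A_i) = 0 or μ(A_i) = 0 are taken to be 0. -/
open MeasureTheory

lemma seg_upper {X : Type*} [MeasurableSpace X] (μ : Measure X)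
    (ρ : X → ℝ) (hρ_nonneg : ∀ x, 0 ≤ ρ x) (hi : Integrable ρ μ)
    (hent : Integrable (fun x => ρ x * Real.log (ρ x)) μ)
    (A : Set X) (hf : μ A < ⊤) :
    (∫ x in A, ρ x ∂μ) * (Real.log (∫ x in A, ρ x ∂μ) - Real.log ((μ A).toReal))
      ≤ ∫ x in A, ρ x * Real.log (ρ x) ∂μ := by
  have hw0 : 0 ≤ ∫ x in A, ρ x ∂μ := integral_nonneg hρ_nonneg
  have : IsFiniteMeasure (μ.restrict A) := ⟨by simpa using hf⟩
  set w := ∫ x in A, ρ x ∂μ with hw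
  rcases hw0.eq_or_lt with h0 | h0
  · have h1 : ρ =ᵐ[μ.restrict A] 0 :=
      (integral_eq_zero_iff_of_nonneg hρ_nonneg hi.integrableOn).1 h0.symm
    have h2 : ∫ x in A, ρ x * Real.log (ρ x) ∂μ = 0 := by
      apply integral_eq_zero_of_ae
      filter_upwards [h1] with x hx
      simp [hx]
    rw [h2, ← h0]; simp
  · have hm : 0 < (μ A).toReal := by
      refine ENNReal.toReal_pos (fun h => ?_) hf.ne
      rw [hw, Measure.restrict_eq_zero.2 h] at h0
      simp at h0
    set c := w / (μ A).toReal with hc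
    have hc0 : 0 < c := div_pos h0 hm
    have key : ∫ x in A, (ρ x * (Real.log c + 1) - c) ∂μ ≤ ∫ x in A, ρ x * Real.log (ρ x) ∂μ := by
      apply integral_mono ((hi.integrableOn.mul_const _).sub (integrable_const _)) hent.integrableOn
      intro x
      rcases (hρ_nonneg x).eq_or_lt with hx | hx
      · show ρ x * (Real.log c + 1) - c ≤ ρ x * Real.log (ρ x)
        rw [← hx]; linarith
      · have h1 := Real.log_le_sub_one_of_pos (div_pos hc0 hx)
        rw [Real.log_div hc0.ne' hx.ne'] at h1
        have h2 := mul_le_mul_of_nonneg_left h1 hx.le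
        have h3 : ρ x * (c / ρ x - 1) = c - ρ x := by field_simp
        show ρ x * (Real.log c + 1) - c ≤ ρ x * Real.log (ρ x)
        linarith
    rw [integral_sub (hi.integrableOn.mul_const _) (integrable_const _), integral_mul_const,
      integral_const, ← hw] at key
    have h4 : (μ.restrict A).real Set.univ = (μ A).toReal := by simp [Measure.real]
    rw [h4, smul_eq_mul] at key
    have h5 : (μ A).toReal * c = w := by rw [hc]; field_simp
    have h6 : Real.log c = Real.log w - Real.log (μ A).toReal := Real.log_div h0.ne' hm.ne'
    rw [← h6]
    linarith

lemma seg_lower {X : Type*} [MeasurableSpace X] (μ : Measure X)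
    (ρ : X → ℝ) (hρ_nonneg : ∀ x, 0 ≤ ρ x) (hi : Integrable ρ μ)
    (hent : Integrable (fun x => ρ x * Real.log (ρ x)) μ)
    (A : Set X) (hA : MeasurableSet A) (hf : μ A < ⊤) (δ : ℝ)
    (hz : ∀ x ∈ A, ∀ y ∈ A, ρ x = 0 → ρ y = 0)
    (hl : ∀ x ∈ A, ∀ y ∈ A, Real.log (ρ x) - δ ≤ Real.log (ρ y)) :
    (∫ x in A, ρ x * Real.log (ρ x) ∂μ) - δ * (∫ x in A, ρ x ∂μ) ≤
    (∫ x in A, ρ x ∂μ) * (Real.log (∫ x in A, ρ x ∂μ) - Real.log ((μ A).toReal)) := by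
  have : IsFiniteMeasure (μ.restrict A) := ⟨by simpa using hf⟩
  by_cases hm0 : μ A = 0
  · simp [Measure.restrict_eq_zero.2 hm0]
  have hm : 0 < (μ A).toReal := ENNReal.toReal_pos hm0 hf.ne
  by_cases h0 : ∃ x ∈ A, ρ x = 0
  · obtain ⟨x, hx, hx0⟩ := h0
    have h1 : ∫ y in A, ρ y ∂μ = 0 :=
      setIntegral_eq_zero_of_forall_eq_zero fun y hy => hz x hx y hy hx0
    have h2 : ∫ y in A, ρ y * Real.log (ρ y) ∂μ = 0 :=
      setIntegral_eq_zero_of_forall_eq_zero fun y hy => by simp [hz x hx y hy hx0]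
    simp [h1, h2]
  push Not at h0
  set w := ∫ x in A, ρ x ∂μ with hw
  have hb : ∀ x ∈ A, Real.log (ρ x) - δ ≤ Real.log w - Real.log (μ A).toReal := by
    intro x hx
    have h1 : ∫ y in A, Real.exp (Real.log (ρ x) - δ) ∂μ ≤ w := by
      apply setIntegral_mono_on (integrable_const _) hi.integrableOn hA
      intro y hy
      have hy0 := (hρ_nonneg y).lt_of_ne' (h0 y hy)
      rw [← Real.le_log_iff_exp_le hy0]
      exact hl x hx y hy
    rw [integral_const] at h1
    have h4 : (μ.restrict A).real Set.univ = (μ A).toReal := by simp [Measure.real]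
    rw [h4, smul_eq_mul] at h1
    have h5 := Real.log_le_log (mul_pos hm (Real.exp_pos _)) h1
    rw [Real.log_mul hm.ne' (Real.exp_pos _).ne', Real.log_exp] at h5
    linarith
  have key : ∫ x in A, ρ x * Real.log (ρ x) ∂μ ≤
      ∫ x in A, ρ x * (Real.log w - Real.log (μ A).toReal + δ) ∂μ := by
    apply setIntegral_mono_on hent.integrableOn (hi.integrableOn.mul_const _) hA
    intro x hx
    apply mul_le_mul_of_nonneg_left _ (hρ_nonneg x)
    linarith [hb x hx]
  rw [integral_mul_const, ← hw] at key
  linarith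

/-- Variational formula for the Segal entropy over countable partitions (commutative case):
for σ-finite `μ` and a density `ρ ≥ 0` with `∫ ρ dμ = 1`, `ρ log ρ ∈ L¹(μ)` (`0 log 0 = 0`),
`∫ ρ log ρ dμ` is the supremum, over countable measurable partitions `(A_i)` of `X` into sets
of finite measure, of `Σ_i ω(A_i)(log ω(A_i) − log μ(A_i))` with `ω(A_i) = ∫_{A_i} ρ dμ`
(summands with `ω(A_i) = 0` or `μ(A_i) = 0` vanish automatically, since `ω(A_i) = 0` whenever
`μ(A_i) = 0`, `0 * x = 0` and `Real.log 0 = 0`). -/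
theorem segal_entropy_partition_variational
    {X : Type*} [MeasurableSpace X] (μ : Measure X) [SigmaFinite μ]
    (ρ : X → ℝ) (hρ_meas : Measurable ρ) (hρ_nonneg : ∀ x, 0 ≤ ρ x)
    (hρ_int : ∫ x, ρ x ∂μ = 1)
    (hent : Integrable (fun x => ρ x * Real.log (ρ x)) μ) :
    IsLUB
      {r : ℝ | ∃ A : ℕ → Set X,
        (∀ i, MeasurableSet (A i)) ∧ Pairwise (Function.onFun Disjoint A) ∧
        (⋃ i, A i) = Set.univ ∧ (∀ i, μ (A i) < ⊤) ∧
        Summable (fun i => (∫ x in A i, ρ x ∂μ) *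
          (Real.log (∫ x in A i, ρ x ∂μ) - Real.log ((μ (A i)).toReal))) ∧
        r = ∑' i, (∫ x in A i, ρ x ∂μ) *
          (Real.log (∫ x in A i, ρ x ∂μ) - Real.log ((μ (A i)).toReal))}
      (∫ x, ρ x * Real.log (ρ x) ∂μ) := by
  have hi : Integrable ρ μ := by
    by_contra h
    rw [integral_undef h] at hρ_int
    norm_num at hρ_int
  have hsum : ∀ (f : X → ℝ), Integrable f μ → ∀ A : ℕ → Set X, (∀ i, MeasurableSet (A i)) →
      Pairwise (Function.onFun Disjoint A) → (⋃ i, A i) = Set.univ →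
      HasSum (fun i => ∫ x in A i, f x ∂μ) (∫ x, f x ∂μ) := by
    intro f hf A hA hd hu
    have := hasSum_integral_iUnion (μ := μ) (f := f) hA hd hf.integrableOn
    rwa [hu, setIntegral_univ] at this
  constructor
  · rintro r ⟨A, hA, hd, hu, hf, hs, rfl⟩
    exact hasSum_le (fun i => seg_upper μ ρ hρ_nonneg hi hent (A i) (hf i)) hs.hasSum
      (hsum _ hent A hA hd hu)
  · intro b hb
    refine le_of_forall_pos_le_add fun δ hδ => ?_
    let g : X → ℤ × (ℕ × ℕ) := fun x =>
      (⌊Real.log (ρ x) / δ⌋, (Set.indicator {x | ρ x = 0} (fun _ => 1) x, spanningSetsIndex μ x))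
    have hg : Measurable g := by
      refine Measurable.prodMk ?_ (Measurable.prodMk ?_ (measurableSet_spanningSetsIndex μ))
      · exact ((Real.measurable_log.comp hρ_meas).div_const δ).floor
      · exact measurable_const.indicator (hρ_meas (measurableSet_singleton 0))
    let A : ℕ → Set X := fun i => {x | Encodable.encode (g x) = i}
    have hgA : ∀ i, ∀ x ∈ A i, ∀ y ∈ A i, g x = g y := fun i x hx y hy =>
      Encodable.encode_injective (hx.trans hy.symm)
    have hA : ∀ i, MeasurableSet (A i) := fun i =>
      hg (Set.to_countable {p | Encodable.encode p = i}).measurableSet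
    have hd : Pairwise (Function.onFun Disjoint A) := by
      intro i j hij
      refine Set.disjoint_left.2 fun x hx hy => hij (hx.symm.trans hy)
    have hu : (⋃ i, A i) = Set.univ := by
      ext x; simp [A]
    have hf : ∀ i, μ (A i) < ⊤ := by
      intro i
      rcases (A i).eq_empty_or_nonempty with h | ⟨x, hx⟩
      · simp [h]
      · refine (measure_mono fun y hy => ?_).trans_lt
          (measure_spanningSets_lt_top μ (spanningSetsIndex μ x))
        have h1 : spanningSetsIndex μ x = spanningSetsIndex μ y :=
          congrArg (fun p => p.2.2) (hgA i x hx y hy)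
        rw [h1]
        exact mem_spanningSetsIndex μ y
    have hlow : ∀ i, _ := fun i => seg_lower μ ρ hρ_nonneg hi hent (A i) (hA i) (hf i) δ
      (by
        intro x hx y hy hx0
        have h1 : Set.indicator {x | ρ x = 0} (fun _ => (1 : ℕ)) x =
            Set.indicator {x | ρ x = 0} (fun _ => (1 : ℕ)) y :=
          congrArg (fun p => p.2.1) (hgA i x hx y hy)
        by_contra hy0
        simp [Set.indicator, hx0, hy0] at h1)
      (by
        intro x hx y hy
        have h1 : ⌊Real.log (ρ x) / δ⌋ = ⌊Real.log (ρ y) / δ⌋ :=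
          congrArg (fun p => p.1) (hgA i x hx y hy)
        have h2 := (abs_lt.1 (Int.abs_sub_lt_one_of_floor_eq_floor h1)).2
        rw [← sub_div, div_lt_one hδ] at h2
        linarith)
    have hup := fun i => seg_upper μ ρ hρ_nonneg hi hent (A i) (hf i)
    have s1 := hsum _ hent A hA hd hu
    have s2 := hsum _ hi A hA hd hu
    have s3 := s1.sub (s2.mul_left δ)
    have hs : Summable (fun i => (∫ x in A i, ρ x ∂μ) *
          (Real.log (∫ x in A i, ρ x ∂μ) - Real.log ((μ (A i)).toReal))) := by
      have h := Summable.of_nonneg_of_le (fun i => sub_nonneg.2 (hlow i))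
        (fun i => sub_le_sub_right (hup i) _) (s1.sub s3).summable
      simpa using h.add s3.summable
    have h1 := hasSum_le hlow s3 hs.hasSum
    have h2 := hb ⟨A, hA, hd, hu, hf, hs, rfl⟩
    rw [hρ_int] at h1
    linarith
end

section
/- Let (X, 𝒜, μ) be a measure space with μ σ-finite, let α ∈ (0,1), and let ρ : X → [0,∞) be measurable with ∫ ρ dμ = 1 and ∫ ρ^α dμ < ∞. Then ∫ ρ^α dμ = inf over all countable measurable partitions (A_i)_{i∈ℕ} of X into sets of finite measure of Σ_i ω(A_i)^α μ(A_i)^{1−α}, where ω(A_i) = ∫_{A_i} ρ dμ and summands with μ(A_i) = 0 are taken to be 0. Consequently, the Rényi entropy R_α := (1/(α−1)) log ∫ ρ^α dμ equals (1/(α−1)) · inf over such partitions of log Σ_i ω(A_i)^α μ(A_i)^{1−α}. -/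
open MeasureTheory

lemma renyi_aux_holder {X : Type*} [MeasurableSpace X] (μ : Measure X) {α : ℝ}
    (hα : α ∈ Set.Ioo (0 : ℝ) 1) (ρ : X → ℝ) (h0 : ∀ x, 0 ≤ ρ x)
    (hi : Integrable ρ μ) (hia : Integrable (fun x => ρ x ^ α) μ) (A : Set X) (hA : μ A < ⊤) :
    ∫ x in A, ρ x ^ α ∂μ ≤ (∫ x in A, ρ x ∂μ) ^ α * ((μ A).toReal) ^ (1 - α) := by
  obtain ⟨ha0, ha1⟩ := hα
  by_cases hz : μ A = 0
  · rw [Measure.restrict_eq_zero.2 hz]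
    simp [hz, ha0.ne']
  have hm : 0 < (μ A).toReal := ENNReal.toReal_pos hz hA.ne
  have hJ := (Real.concaveOn_rpow ha0.le ha1.le).le_map_set_average
    (Real.continuous_rpow_const ha0.le).continuousOn isClosed_Ici hz hA.ne
    (Filter.Eventually.of_forall fun x => h0 x) hi.integrableOn hia.integrableOn
  simp only [setAverage_eq, smul_eq_mul, Measure.real] at hJ
  have hI : 0 ≤ ∫ x in A, ρ x ∂μ := integral_nonneg h0
  rw [Real.mul_rpow (by positivity) hI, inv_mul_le_iff₀ hm, Real.inv_rpow hm.le] at hJ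
  rw [Real.rpow_sub hm, Real.rpow_one]
  refine hJ.trans (le_of_eq ?_)
  field_simp

lemma renyi_aux_partition {X : Type*} [MeasurableSpace X] (μ : Measure X) [SigmaFinite μ]
    (ρ : X → ℝ) (hm : Measurable ρ) (h0 : ∀ x, 0 ≤ ρ x) (s : ℝ) (hs : 0 < s) :
    ∃ A : ℕ → Set X, (∀ i, MeasurableSet (A i)) ∧ Pairwise (Function.onFun Disjoint A) ∧
        (⋃ i, A i) = Set.univ ∧ (∀ i, μ (A i) < ⊤) ∧
        ∀ i, ∀ x ∈ A i, ∀ y ∈ A i, ρ x ≤ Real.exp s * ρ y := by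
  classical
  let g : X → (ℤ × Bool) × ℕ := fun x =>
    ((⌊Real.log (ρ x) / s⌋, decide (ρ x = 0)), spanningSetsIndex μ x)
  have hg : Measurable g := by
    refine Measurable.prodMk (Measurable.prodMk ?_ ?_) (measurableSet_spanningSetsIndex μ)
    · exact Int.measurable_floor.comp (hm.log.div_const s)
    · refine measurable_to_bool ?_
      have : (fun x => decide (ρ x = 0)) ⁻¹' {true} = ρ ⁻¹' {0} := by ext; simp
      rw [this]
      exact hm (measurableSet_singleton 0)
  refine ⟨fun i => {x | Encodable.encode (g x) = i}, ?_, ?_, ?_, ?_, ?_⟩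
  · intro i
    exact hg (t := {z | Encodable.encode z = i}) (MeasurableSet.of_discrete)
  · intro i j hij
    refine Set.disjoint_left.2 fun x hx hy => hij ?_
    exact hx.symm.trans hy
  · ext x; simp
  · intro i
    by_cases hne : ∃ x, Encodable.encode (g x) = i
    · obtain ⟨x, hx⟩ := hne
      refine lt_of_le_of_lt (measure_mono ?_) (measure_spanningSets_lt_top μ (spanningSetsIndex μ x))
      intro y hy
      have h : g y = g x := Encodable.encode_injective (hy.trans hx.symm)
      have h2 : spanningSetsIndex μ y = spanningSetsIndex μ x := congrArg Prod.snd h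
      rw [← h2]
      exact mem_spanningSetsIndex μ y
    · have : {x | Encodable.encode (g x) = i} = ∅ := by
        ext x; simpa using fun h => hne ⟨x, h⟩
      simp [this]
  · intro i x hx y hy
    have h : g x = g y := Encodable.encode_injective (hx.trans hy.symm)
    have h1 : ⌊Real.log (ρ x) / s⌋ = ⌊Real.log (ρ y) / s⌋ := congrArg (fun z => z.1.1) h
    have h2 : decide (ρ x = 0) = decide (ρ y = 0) := congrArg (fun z => z.1.2) h
    have h3 : ρ x = 0 ↔ ρ y = 0 := by simpa using h2
    by_cases hx0 : ρ x = 0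
    · rw [hx0, h3.1 hx0]; simp
    have hxp : 0 < ρ x := lt_of_le_of_ne (h0 x) (Ne.symm hx0)
    have hyp : 0 < ρ y := lt_of_le_of_ne (h0 y) (Ne.symm fun h => hx0 (h3.2 h))
    have h4 := (abs_lt.1 (Int.abs_sub_lt_one_of_floor_eq_floor h1)).2
    rw [← sub_div, div_lt_one hs] at h4
    have h5 : Real.log (ρ x) ≤ s + Real.log (ρ y) := by linarith
    have h6 := Real.exp_le_exp.2 h5
    rwa [Real.exp_add, Real.exp_log hxp, Real.exp_log hyp] at h6

lemma renyi_aux_upper {X : Type*} [MeasurableSpace X] (μ : Measure X) {α : ℝ}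
    (hα : α ∈ Set.Ioo (0 : ℝ) 1) (ρ : X → ℝ) (h0 : ∀ x, 0 ≤ ρ x)
    (hi : Integrable ρ μ) (hia : Integrable (fun x => ρ x ^ α) μ) (A : Set X)
    (hAm : MeasurableSet A) (hA : μ A < ⊤) (s : ℝ)
    (hc : ∀ x ∈ A, ∀ y ∈ A, ρ x ≤ Real.exp s * ρ y) :
    (∫ x in A, ρ x ∂μ) ^ α * ((μ A).toReal) ^ (1 - α) ≤
      Real.exp (s * α) * ∫ x in A, ρ x ^ α ∂μ := by
  obtain ⟨ha0, ha1⟩ := hα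
  by_cases hz : μ A = 0
  · rw [Measure.restrict_eq_zero.2 hz]
    simp [hz, ha0.ne']
  have hm : 0 < (μ A).toReal := ENNReal.toReal_pos hz hA.ne
  have hI : 0 ≤ ∫ x in A, ρ x ∂μ := integral_nonneg h0
  set T := (∫ x in A, ρ x ∂μ) ^ α * ((μ A).toReal) ^ (1 - α) with hT
  have key : ∀ y ∈ A, T / (μ A).toReal ≤ Real.exp (s * α) * ρ y ^ α := by
    intro y hy
    have h1 : ∫ x in A, ρ x ∂μ ≤ (Real.exp s * ρ y) * (μ A).toReal := by
      have := setIntegral_mono_on hi.integrableOn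
        (integrableOn_const (C := Real.exp s * ρ y) hA.ne) hAm (fun x hx => hc x hx y hy)
      simpa [Measure.real, mul_comm] using this
    have hy0 := h0 y
    have h2 := Real.rpow_le_rpow hI h1 ha0.le
    rw [Real.mul_rpow (by positivity) hm.le, Real.mul_rpow (Real.exp_pos s).le hy0,
      ← Real.exp_mul] at h2
    rw [div_le_iff₀ hm, hT]
    calc _ ≤ Real.exp (s * α) * ρ y ^ α * (μ A).toReal ^ α * (μ A).toReal ^ (1 - α) := by
          gcongr
      _ = _ := by
          rw [mul_assoc, ← Real.rpow_add hm]; simp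
  have := setIntegral_mono_on (integrableOn_const (C := T / (μ A).toReal) hA.ne)
    (hia.integrableOn.const_mul (Real.exp (s * α))) hAm key
  rw [integral_const_mul] at this
  simp only [setIntegral_const, smul_eq_mul, Measure.real] at this
  rwa [mul_div_cancel₀ _ hm.ne'] at this

/-- Variational formula for `∫ ρ^α dμ`, `α ∈ (0,1)` (commutative Rényi entropy): for σ-finite
`μ` and a density `ρ ≥ 0` with `∫ ρ dμ = 1` and `ρ^α ∈ L¹(μ)`, `∫ ρ^α dμ` is the infimum,
over countable measurable partitions `(A_i)` of `X` into sets of finite measure, of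
`Σ_i ω(A_i)^α μ(A_i)^{1−α}` with `ω(A_i) = ∫_{A_i} ρ dμ` (summands with `μ(A_i) = 0` vanish
automatically since `0 ^ (1−α) = 0`); consequently the Rényi entropy
`R_α = (1/(α−1)) log ∫ ρ^α dμ` equals `(1/(α−1))` times the infimum of the logs of these sums. -/
theorem renyi_lt_one_partition_variational
    {X : Type*} [MeasurableSpace X] (μ : Measure X) [SigmaFinite μ] {α : ℝ}
    (hα : α ∈ Set.Ioo (0 : ℝ) 1)
    (ρ : X → ℝ) (hρ_meas : Measurable ρ) (hρ_nonneg : ∀ x, 0 ≤ ρ x)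
    (hρ_int : ∫ x, ρ x ∂μ = 1)
    (hρα_int : Integrable (fun x => ρ x ^ α) μ) :
    IsGLB
      {r : ℝ | ∃ A : ℕ → Set X,
        (∀ i, MeasurableSet (A i)) ∧ Pairwise (Function.onFun Disjoint A) ∧
        (⋃ i, A i) = Set.univ ∧ (∀ i, μ (A i) < ⊤) ∧
        Summable (fun i => (∫ x in A i, ρ x ∂μ) ^ α * ((μ (A i)).toReal) ^ (1 - α)) ∧
        r = ∑' i, (∫ x in A i, ρ x ∂μ) ^ α * ((μ (A i)).toReal) ^ (1 - α)}
      (∫ x, ρ x ^ α ∂μ) ∧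
    (1 / (α - 1)) * Real.log (∫ x, ρ x ^ α ∂μ) =
      (1 / (α - 1)) * sInf (Real.log ''
        {r : ℝ | ∃ A : ℕ → Set X,
          (∀ i, MeasurableSet (A i)) ∧ Pairwise (Function.onFun Disjoint A) ∧
          (⋃ i, A i) = Set.univ ∧ (∀ i, μ (A i) < ⊤) ∧
          Summable (fun i => (∫ x in A i, ρ x ∂μ) ^ α * ((μ (A i)).toReal) ^ (1 - α)) ∧
          r = ∑' i, (∫ x in A i, ρ x ∂μ) ^ α * ((μ (A i)).toReal) ^ (1 - α)}) := by
  have hi : Integrable ρ μ := by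
    by_contra h
    rw [integral_undef h] at hρ_int
    exact zero_ne_one hρ_int
  have hα' := hα
  obtain ⟨ha0, ha1⟩ := hα'
  set S : Set ℝ := {r : ℝ | ∃ A : ℕ → Set X,
        (∀ i, MeasurableSet (A i)) ∧ Pairwise (Function.onFun Disjoint A) ∧
        (⋃ i, A i) = Set.univ ∧ (∀ i, μ (A i) < ⊤) ∧
        Summable (fun i => (∫ x in A i, ρ x ∂μ) ^ α * ((μ (A i)).toReal) ^ (1 - α)) ∧
        r = ∑' i, (∫ x in A i, ρ x ∂μ) ^ α * ((μ (A i)).toReal) ^ (1 - α)} with hS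
  set I := ∫ x, ρ x ^ α ∂μ with hI
  have hsum : ∀ A : ℕ → Set X, (∀ i, MeasurableSet (A i)) →
      Pairwise (Function.onFun Disjoint A) → (⋃ i, A i) = Set.univ →
      HasSum (fun i => ∫ x in A i, ρ x ^ α ∂μ) I := by
    intro A h1 h2 h3
    have := hasSum_integral_iUnion (f := fun x => ρ x ^ α) (μ := μ) h1 h2 hρα_int.integrableOn
    rwa [h3, setIntegral_univ] at this
  have hlow : ∀ r ∈ S, I ≤ r := by
    rintro r ⟨A, h1, h2, h3, h4, h5, rfl⟩
    exact hasSum_le (fun i => renyi_aux_holder μ hα ρ hρ_nonneg hi hρα_int (A i) (h4 i))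
      (hsum A h1 h2 h3) h5.hasSum
  have hup : ∀ s : ℝ, 0 < s → ∃ r ∈ S, r ≤ Real.exp (s * α) * I := by
    intro s hs
    obtain ⟨A, h1, h2, h3, h4, h5⟩ := renyi_aux_partition μ ρ hρ_meas hρ_nonneg s hs
    have hle := fun i => renyi_aux_upper μ hα ρ hρ_nonneg hi hρα_int (A i) (h1 i) (h4 i) s (h5 i)
    have hS1 := (hsum A h1 h2 h3).mul_left (Real.exp (s * α))
    have hsm : Summable
        (fun i => (∫ x in A i, ρ x ∂μ) ^ α * ((μ (A i)).toReal) ^ (1 - α)) := by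
      refine Summable.of_nonneg_of_le (fun i => ?_) hle hS1.summable
      have : 0 ≤ ∫ x in A i, ρ x ∂μ := integral_nonneg hρ_nonneg
      positivity
    exact ⟨_, ⟨A, h1, h2, h3, h4, hsm, rfl⟩, hasSum_le hle hsm.hasSum hS1⟩
  have hglb : IsGLB S I := by
    refine ⟨fun r hr => hlow r hr, fun b hb => ?_⟩
    have ht : Filter.Tendsto (fun s : ℝ => Real.exp (s * α) * I) (nhdsWithin 0 (Set.Ioi 0))
        (nhds I) := by
      have hc : Continuous (fun s : ℝ => Real.exp (s * α) * I) := by fun_prop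
      have := hc.tendsto 0
      simp only [zero_mul, Real.exp_zero, one_mul] at this
      exact this.mono_left nhdsWithin_le_nhds
    refine ge_of_tendsto ht ?_
    filter_upwards [self_mem_nhdsWithin] with s hs
    obtain ⟨r, hr, hr2⟩ := hup s hs
    exact (hb hr).trans hr2
  refine ⟨hglb, ?_⟩
  have hIpos : 0 < I := by
    have hn : ∀ x, 0 ≤ ρ x ^ α := fun x => Real.rpow_nonneg (hρ_nonneg x) α
    refine lt_of_le_of_ne (integral_nonneg hn) fun h => ?_
    have h1 := (integral_eq_zero_iff_of_nonneg hn hρα_int).1 h.symm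
    have h2 : ρ =ᵐ[μ] 0 := by
      filter_upwards [h1] with x hx
      exact (Real.rpow_eq_zero (hρ_nonneg x) ha0.ne').1 hx
    rw [integral_congr_ae h2] at hρ_int
    simp at hρ_int
  obtain ⟨r0, hr0, -⟩ := hup 1 one_pos
  have hlog : IsGLB (Real.log '' S) (Real.log I) := by
    refine ⟨?_, fun b hb => ?_⟩
    · rintro _ ⟨r, hr, rfl⟩
      exact Real.log_le_log hIpos (hlow r hr)
    · rw [Real.le_log_iff_exp_le hIpos]
      refine hglb.2 fun r hr => ?_
      rw [← Real.le_log_iff_exp_le (hIpos.trans_le (hlow r hr))]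
      exact hb ⟨r, hr, rfl⟩
  rw [hlog.csInf_eq ⟨_, r0, hr0, rfl⟩]
end
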